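/- arXiv:2203.13578 — 3 statements merged into one kernel-verified Lean document; each statement's English description precedes it below -/
import Mathlib

section
/- For every N ≥ 0 the polynomials Q_{n,N} satisfy: (i) Q_{N+1,N} = Q_{N+2,N} = ⋯ = Q_{N+p−1,N} = 0; (ii) Q_{N,N} = h_N^{−1}·B_N and Q_{N+p,N} = (−1)^{p−1}·h_{N+1}^{−1}·B_{N+1}; (iii) the row vector Q^{⟨N⟩} := (Q_{0,N}, …, Q_{N,N}) satisfies the polynomial identity Q^{⟨N⟩}(x)·T^{[N]} + (0, …, 0, T_{N+p,N}·Q_{N+p,N}(x)) = x·Q^{⟨N⟩}(x). -/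
open Polynomial

noncomputable def Qp (p : ℕ) (A : Fin p → ℕ → Polynomial ℝ) (n N : ℕ) : Polynomial ℝ :=
  Matrix.det (Matrix.of fun i a : Fin p =>
    if (i : ℕ) = 0 then A a n else A a (N + (i : ℕ)))

noncomputable def truncM (T : ℕ → ℕ → ℝ) (N : ℕ) : Matrix (Fin (N + 1)) (Fin (N + 1)) ℝ :=
  Matrix.of fun i j : Fin (N + 1) => T (i : ℕ) (j : ℕ)

/-!
Since `Q_{n,N}` is linear in the first row of its determinant, `n ↦ Q_{n,N}` inherits the type I
recurrence, and the repeated rows give `Q_{N+1,N} = ⋯ = Q_{N+p-1,N} = 0`; in the first `N + 1`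
columns of `T` only the boundary term `T_{N+p,N} Q_{N+p,N}` survives the truncation. Truncating the
type II recurrence to the first `N + 1` rows leaves the boundary term `B_{N+1}`. Pairing the two
truncated eigenvalue equations cancels everything but these terms:
`Q_{N,N} B_{N+1} = T_{N+p,N} Q_{N+p,N} B_N`. A cyclic permutation of rows gives
`Q_{N+p,N} = (-1)^{p-1} Q_{N+1,N+1}`, and as `B_N` is monic it can be cancelled, so
`h_N Q_{N,N} = B_N` follows by induction on `N`.
-/

section TruncatedEigenvectors

open Matrix

theorem mul_eq_mul_of_vecMul_add_single_eq_smul {m S : Type*} [Fintype m]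
    [DecidableEq m] [CommRing S] {M : Matrix m m S} {u v : m → S} {i j : m} {r s x : S}
    (hu : u ᵥ* M + Pi.single j r = x • u) (hv : M *ᵥ v + Pi.single i s = x • v) :
    u i * s = r * v j := by
  have hpair : u ⬝ᵥ (x • v) = (x • u) ⬝ᵥ v := by rw [dotProduct_smul, smul_dotProduct]
  rw [← hu, ← hv, dotProduct_add, add_dotProduct, dotProduct_mulVec, dotProduct_single,
    single_dotProduct] at hpair
  exact add_left_cancel hpair

end TruncatedEigenvectors

section Determinant

variable {S : Type*} [CommRing S] {p : ℕ} [NeZero p]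

/-- The determinant `Q_{n,N}` over an arbitrary commutative ring. The rows `A_N, …, A_{N+p-1}` are
taken first and row `0` is then overwritten by `A_n`, which makes linearity in `A_n` visible. -/
def typeIDet (A : Fin p → ℕ → S) (n N : ℕ) : S :=
  ((Matrix.of fun i a : Fin p => A a (N + i)).updateRow 0 fun a => A a n).det

theorem typeIDet_self (A : Fin p → ℕ → S) (N : ℕ) :
    typeIDet A N N = (Matrix.of fun i a : Fin p => A a (N + i)).det :=
  congrArg Matrix.det (Matrix.updateRow_eq_self _ 0)

theorem typeIDet_add_eq_zero (A : Fin p → ℕ → S) (N : ℕ) {i : ℕ} (hi : i ≠ 0) (hip : i < p) :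
    typeIDet A (N + i) N = 0 :=
  Matrix.det_updateRow_eq_zero (M := Matrix.of fun k a : Fin p => A a (N + k)) (i := ⟨i, hip⟩)
    (Fin.ne_of_val_ne hi)

theorem typeIDet_add_dim (A : Fin p → ℕ → S) (N : ℕ) :
    typeIDet A (N + p) N = (-1) ^ (p - 1) * typeIDet A (N + 1) (N + 1) := by
  have hrotate : (Matrix.of fun i a : Fin p => A a (N + 1 + i)) =
      ((Matrix.of fun i a : Fin p => A a (N + i)).updateRow 0 fun a => A a (N + p)).submatrix
        (finRotate p) id := by
    obtain ⟨q, rfl⟩ := Nat.exists_eq_succ_of_ne_zero (NeZero.ne p)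
    ext1 i a
    rcases eq_or_ne i (Fin.last q) with rfl | hi
    · simp [add_assoc, add_comm 1]
    · have hval : (finRotate (q + 1) i : ℕ) = i + 1 := coe_finRotate_of_ne_last hi
      have hne : finRotate (q + 1) i ≠ 0 := by rw [Ne, Fin.ext_iff, hval]; exact Nat.succ_ne_zero i
      rw [Matrix.submatrix_apply, Matrix.updateRow_ne hne, Matrix.of_apply, Matrix.of_apply, hval,
        add_right_comm, add_assoc, id]
  rw [typeIDet_self, hrotate, Matrix.det_permute, sign_finRotate, ← typeIDet]
  simp [← mul_assoc, ← mul_pow]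

theorem typeIDet_zero_zero {A : Fin p → ℕ → S} (hzero : ∀ a : Fin p, ∀ j < (a : ℕ), A a j = 0)
    (hone : ∀ a : Fin p, A a a = 1) : typeIDet A 0 0 = 1 := by
  rw [typeIDet_self, Matrix.det_of_isLowerTriangular]
  · simp [hone]
  · intro i j (hij : i < j)
    simpa using hzero j i hij

theorem Qp_eq_typeIDet (A : Fin p → ℕ → ℝ[X]) : Qp p A = typeIDet A := by
  ext1 n
  ext1 N
  refine congrArg Matrix.det (Matrix.ext fun i a => ?_)
  simp only [Matrix.of_apply, Matrix.updateRow_apply, Fin.ext_iff, Fin.val_zero]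

end Determinant

/-- `T` is lower Hessenberg with unit superdiagonal and at most `p` nonzero subdiagonals. -/
structure IsBandedHessenberg {R : Type*} [Zero R] [One R] (p : ℕ) (T : ℕ → ℕ → R) : Prop where
  superdiag : ∀ n, T n (n + 1) = 1
  above : ∀ n m, n + 1 < m → T n m = 0
  below : ∀ n m, m + p < n → T n m = 0

namespace IsBandedHessenberg

variable {R M : Type*} [Semiring R] [AddCommMonoid M] [Module R M] {p : ℕ} {T : ℕ → ℕ → R}

theorem sum_column_smul (hT : IsBandedHessenberg p T) (f : ℕ → M) {n K : ℕ} (hK : n + p < K) :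
    ∑ m ∈ Finset.range K, T m n • f m =
      (if n = 0 then 0 else f (n - 1)) +
        ∑ i ∈ Finset.range (p + 1), T (n + i) n • f (n + i) := by
  have hbelow : ∀ m ≥ n + (p + 1), T m n • f m = 0 := fun m hm => by
    rw [hT.below m n (by omega), zero_smul]
  rw [Finset.eventually_constant_sum hbelow (by omega), Finset.sum_range_add]
  congr 1
  cases n with
  | zero => simp
  | succ k =>
    have habove : ∀ m ∈ Finset.range k, T m (k + 1) • f m = 0 := fun m hm => by
      rw [hT.above m (k + 1) (by simpa using hm), zero_smul]
    simp [Finset.sum_range_succ, Finset.sum_eq_zero habove, hT.superdiag]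

theorem sum_row_smul (hT : IsBandedHessenberg p T) (f : ℕ → M) {n K : ℕ} (hK : n + 1 < K) :
    ∑ m ∈ Finset.range K, T n m • f m =
      T n n • f n + ∑ j ∈ Finset.Icc 1 p, (if j ≤ n then T n (n - j) • f (n - j) else 0) +
        f (n + 1) := by
  have habove : ∀ m ≥ n + 2, T n m • f m = 0 := fun m hm => by
    rw [hT.above n m (by omega), zero_smul]
  rw [Finset.eventually_constant_sum habove (by omega), Finset.sum_range_succ, hT.superdiag,
    one_smul]
  congr 1
  set g : ℕ → M := fun j => if j ≤ n then T n (n - j) • f (n - j) else 0 with hg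
  have hg_row : ∀ j ≥ n + 1, g j = 0 := fun j hj => if_neg (by omega)
  have hg_band : ∀ j ≥ p + 1, g j = 0 := fun j hj => by
    rw [hg, ite_eq_right_iff]
    intro hjn
    rw [hT.below n (n - j) (by omega), zero_smul]
  calc ∑ m ∈ Finset.range (n + 1), T n m • f m
      = ∑ j ∈ Finset.range (n + 1), g j := by
        rw [← Finset.sum_flip]
        exact Finset.sum_congr rfl fun j hj => (if_pos (Finset.mem_range_succ_iff.mp hj)).symm
    _ = ∑ j ∈ Finset.range (n + 1 + (p + 1)), g j :=
        (Finset.eventually_constant_sum hg_row (by omega)).symm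
    _ = ∑ j ∈ Finset.range (p + 1), g j := Finset.eventually_constant_sum hg_band (by omega)
    _ = T n n • f n + ∑ j ∈ Finset.Icc 1 p, g j := by
        rw [Finset.range_eq_Ico, Finset.sum_eq_sum_Ico_succ_bot (by omega),
          Finset.Ico_add_one_right_eq_Icc]
        simp [hg]

end IsBandedHessenberg

/-- The leading principal submatrix `T^{[N]}`, of size `N + 1`. -/
def truncation {R : Type*} (T : ℕ → ℕ → R) (N : ℕ) : Matrix (Fin (N + 1)) (Fin (N + 1)) R :=
  Matrix.of fun i j => T i j

section Recurrences

variable {R : Type*} [CommRing R]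

/-- The type I recurrence: `f`, read as an infinite row vector, satisfies `f T = x f`. -/
def IsTypeI (p : ℕ) (T : ℕ → ℕ → R) (f : ℕ → R[X]) : Prop :=
  ∀ n, (if n = 0 then 0 else f (n - 1)) +
    ∑ i ∈ Finset.range (p + 1), C (T (n + i) n) * f (n + i) = X * f n

/-- The type II recurrence: `B`, read as an infinite column vector, satisfies `T B = x B`. The
initial value `B 0` is left free. -/
def IsTypeII (p : ℕ) (T : ℕ → ℕ → R) (B : ℕ → R[X]) : Prop :=
  ∀ n, B (n + 1) = (X - C (T n n)) * B n -
    ∑ j ∈ Finset.Icc 1 p, (if j ≤ n then C (T n (n - j)) * B (n - j) else 0)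

variable {p : ℕ} {T : ℕ → ℕ → R} {f B : ℕ → R[X]}

theorem isTypeI_typeIDet [NeZero p] {A : Fin p → ℕ → R[X]} (hA : ∀ a, IsTypeI p T (A a))
    (N : ℕ) : IsTypeI p T fun n => typeIDet A n N := by
  intro n
  let L : (Fin p → R[X]) →ₗ[R[X]] R[X] :=
    Matrix.detRowAlternating.toMultilinearMap.toLinearMap (fun i a => A a (N + i)) 0
  have hL : ∀ k, typeIDet A k N = L fun a => A a k := fun k => rfl
  have hrow : (if n = 0 then 0 else fun a => A a (n - 1)) +
      ∑ i ∈ Finset.range (p + 1), C (T (n + i) n) • (fun a => A a (n + i)) =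
        (X : R[X]) • fun a => A a n := by
    ext1 a
    simpa [ite_apply] using hA a n
  simpa only [map_add, map_sum, map_smul, apply_ite L, map_zero, smul_eq_mul, ← hL]
    using congrArg L hrow

theorem IsTypeI.vecMul_truncation [NeZero p] (hf : IsTypeI p T f) (hT : IsBandedHessenberg p T)
    {N : ℕ} (hgap : ∀ i, i ≠ 0 → i < p → f (N + i) = 0) :
    Matrix.vecMul (fun i : Fin (N + 1) => f i) ((truncation T N).map C) +
      Pi.single (Fin.last N) (C (T (N + p) N) * f (N + p)) =
        (X : R[X]) • fun i : Fin (N + 1) => f i := by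
  obtain ⟨q, rfl⟩ := Nat.exists_eq_succ_of_ne_zero (NeZero.ne p)
  ext1 j
  have hcolumn : ∑ m ∈ Finset.range (N + 1 + (q + 1)), T m j • f m = X * f j := by
    rw [hT.sum_column_smul f (by omega)]
    simpa only [smul_eq_C_mul] using hf j
  have hzero : ∀ i ∈ Finset.range q, T (N + 1 + i) j • f (N + 1 + i) = 0 := fun i hi => by
    have hi : i < q := Finset.mem_range.mp hi
    rw [add_assoc, hgap (1 + i) (by omega) (by omega), smul_zero]
  have hlast : T (N + (q + 1)) j • f (N + (q + 1)) =
      (Pi.single (Fin.last N) (C (T (N + (q + 1)) N) * f (N + (q + 1))) :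
        Fin (N + 1) → R[X]) j := by
    rcases eq_or_ne j (Fin.last N) with rfl | hj
    · simp [smul_eq_C_mul]
    · have hjN : (j : ℕ) < N := Fin.val_lt_last hj
      rw [hT.below _ _ (by omega), zero_smul, Pi.single_eq_of_ne hj]
  rw [Finset.sum_range_add, Finset.sum_range_succ _ q, Finset.sum_eq_zero hzero, zero_add,
    add_assoc N 1 q, add_comm 1 q, hlast, Finset.sum_range] at hcolumn
  simpa [Matrix.vecMul, dotProduct, truncation, smul_eq_C_mul, mul_comm] using hcolumn

theorem IsTypeII.truncation_mulVec (hB : IsTypeII p T B) (hT : IsBandedHessenberg p T) (N : ℕ) :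
    Matrix.mulVec ((truncation T N).map C) (fun i : Fin (N + 1) => B i) +
      Pi.single (Fin.last N) (B (N + 1)) = (X : R[X]) • fun i : Fin (N + 1) => B i := by
  ext1 i
  have hrow : ∑ m ∈ Finset.range (N + 2), T i m • B m = X * B i := by
    rw [hT.sum_row_smul B (by omega), hB i]
    simp only [smul_eq_C_mul]
    ring
  have hlast : T i (N + 1) • B (N + 1) =
      (Pi.single (Fin.last N) (B (N + 1)) : Fin (N + 1) → R[X]) i := by
    rcases eq_or_ne i (Fin.last N) with rfl | hi
    · simp [hT.superdiag]
    · have hiN : (i : ℕ) < N := Fin.val_lt_last hi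
      rw [hT.above _ _ (by omega), zero_smul, Pi.single_eq_of_ne hi]
  rw [Finset.sum_range_succ, hlast, Finset.sum_range] at hrow
  simpa [Matrix.mulVec, dotProduct, truncation, smul_eq_C_mul] using hrow

theorem IsTypeI.mul_isTypeII_succ [NeZero p] (hf : IsTypeI p T f) (hB : IsTypeII p T B)
    (hT : IsBandedHessenberg p T) {N : ℕ} (hgap : ∀ i, i ≠ 0 → i < p → f (N + i) = 0) :
    f N * B (N + 1) = C (T (N + p) N) * f (N + p) * B N := by
  have hpair := mul_eq_mul_of_vecMul_add_single_eq_smul (hf.vecMul_truncation hT hgap)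
    (hB.truncation_mulVec hT N)
  simpa only [Fin.val_last] using hpair

theorem IsTypeII.isMonicOfDegree [Nontrivial R] (hB : IsTypeII p T B) (hB0 : B 0 = 1) (n : ℕ) :
    IsMonicOfDegree (B n) n := by
  induction n using Nat.strong_induction_on with
  | _ n ih =>
    cases n with
    | zero => rwa [isMonicOfDegree_zero_iff]
    | succ k =>
      have hlead : IsMonicOfDegree ((X - C (T k k)) * B k) (k + 1) :=
        add_comm 1 k ▸ (isMonicOfDegree_X_sub_one (T k k)).mul (ih k (by omega))
      rw [hB k]
      refine hlead.sub (Nat.lt_succ_of_le (natDegree_sum_le_of_forall_le _ _ fun j _ => ?_))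
      split_ifs
      · calc (C (T k (k - j)) * B (k - j)).natDegree
            ≤ (B (k - j)).natDegree := natDegree_C_mul_le _ _
          _ = k - j := (ih (k - j) (by omega)).natDegree_eq
          _ ≤ k := Nat.sub_le k j
      · simp

/-- The normalising constant `h_n`: up to sign, the product of the first `n` entries on the lowest
subdiagonal of `T`. -/
def typeINorm (p : ℕ) (T : ℕ → ℕ → R) (n : ℕ) : R :=
  (-1) ^ ((p - 1) * n) * ∏ i ∈ Finset.range n, T (i + p) i

theorem typeINorm_succ (p : ℕ) (T : ℕ → ℕ → R) (n : ℕ) :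
    typeINorm p T (n + 1) = (-1) ^ (p - 1) * T (n + p) n * typeINorm p T n := by
  rw [typeINorm, typeINorm, Finset.prod_range_succ, mul_add_one, pow_add]
  ring

theorem typeINorm_ne_zero [IsDomain R] (hlow : ∀ n, T (n + p) n ≠ 0) (n : ℕ) :
    typeINorm p T n ≠ 0 :=
  mul_ne_zero (pow_ne_zero _ (neg_ne_zero.mpr one_ne_zero))
    (Finset.prod_ne_zero_iff.mpr fun i _ => hlow i)

theorem typeINorm_mul_typeIDet_self [NeZero p] (hT : IsBandedHessenberg p T)
    (hB : IsTypeII p T B) (hB0 : B 0 = 1) {A : Fin p → ℕ → R[X]}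
    (hAzero : ∀ a : Fin p, ∀ j < (a : ℕ), A a j = 0) (hAone : ∀ a : Fin p, A a a = 1)
    (hA : ∀ a, IsTypeI p T (A a)) (N : ℕ) : C (typeINorm p T N) * typeIDet A N N = B N := by
  nontriviality R
  induction N with
  | zero => simp [typeINorm, hB0, typeIDet_zero_zero hAzero hAone]
  | succ N ih =>
    have hpair : typeIDet A N N * B (N + 1) = C (T (N + p) N) * typeIDet A (N + p) N * B N :=
      (isTypeI_typeIDet hA N).mul_isTypeII_succ hB hT fun _ => typeIDet_add_eq_zero A N
    rw [typeIDet_add_dim] at hpair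
    refine (hB.isMonicOfDegree hB0 N).monic.isRegular.left ?_
    simp only [typeINorm_succ, C_mul, C_pow, C_neg, C_1]
    linear_combination B (N + 1) * ih - C (typeINorm p T N) * hpair

end Recurrences

theorem stmt_3_general {K : Type*} [Field K] {p : ℕ} [NeZero p] {T : ℕ → ℕ → K}
    (hT : IsBandedHessenberg p T) (hTlow : ∀ n, p ≤ n → T n (n - p) ≠ 0) {B : ℕ → K[X]}
    (hB0 : B 0 = 1) (hB : IsTypeII p T B) {A : Fin p → ℕ → K[X]}
    (hAzero : ∀ a : Fin p, ∀ j < (a : ℕ), A a j = 0) (hAone : ∀ a : Fin p, A a a = 1)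
    (hA : ∀ a, IsTypeI p T (A a)) (N : ℕ) :
    (∀ i, 1 ≤ i → i ≤ p - 1 → typeIDet A (N + i) N = 0) ∧
    (typeIDet A N N = C (typeINorm p T N)⁻¹ * B N) ∧
    (typeIDet A (N + p) N = C ((-1) ^ (p - 1) * (typeINorm p T (N + 1))⁻¹) * B (N + 1)) ∧
    (∀ j : Fin (N + 1),
      (∑ i : Fin (N + 1), typeIDet A i N * C (truncation T N i j)) +
        (if (j : ℕ) = N then C (T (N + p) N) * typeIDet A (N + p) N else 0) =
          X * typeIDet A j N) := by
  have hself : ∀ n, typeIDet A n n = C (typeINorm p T n)⁻¹ * B n := fun n => by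
    have hne := typeINorm_ne_zero (fun k => by simpa using hTlow (k + p) (by omega)) n
    rw [← typeINorm_mul_typeIDet_self hT hB hB0 hAzero hAone hA n, ← mul_assoc, ← C_mul,
      inv_mul_cancel₀ hne, C_1, one_mul]
  have hgap : ∀ i, i ≠ 0 → i < p → typeIDet A (N + i) N = 0 := fun _ => typeIDet_add_eq_zero A N
  have hvec := (isTypeI_typeIDet hA N).vecMul_truncation hT hgap
  refine ⟨fun i hi hip => hgap i (by omega) (by omega), hself N, ?_, fun j => ?_⟩
  · rw [typeIDet_add_dim, hself (N + 1)]
    simp only [C_mul, C_pow, C_neg, C_1, mul_assoc]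
  · simpa [Matrix.vecMul, dotProduct, Pi.single_apply, Fin.ext_iff] using congrFun hvec j

theorem stmt_3
    (p : ℕ) (hp : 1 ≤ p)
    (T : ℕ → ℕ → ℝ)
    (hT1 : ∀ n, T n (n + 1) = 1)
    (hTsup : ∀ n m, n + 1 < m → T n m = 0)
    (hTsub : ∀ n m, m + p < n → T n m = 0)
    (hTlow : ∀ n, p ≤ n → T n (n - p) ≠ 0)
    (B : ℕ → Polynomial ℝ)
    (hB0 : B 0 = 1)
    (hBrec : ∀ n, B (n + 1) = (X - C (T n n)) * B n
      - ∑ j ∈ Finset.Icc 1 p, (if j ≤ n then C (T n (n - j)) * B (n - j) else 0))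
    (A : Fin p → ℕ → Polynomial ℝ)
    (hAconst : ∀ a : Fin p, ∀ j < p, ∃ c : ℝ, A a j = C c)
    (hAzero : ∀ a : Fin p, ∀ j : ℕ, j < (a : ℕ) → A a j = 0)
    (hAone : ∀ a : Fin p, A a (a : ℕ) = 1)
    (hArec : ∀ a : Fin p, ∀ n : ℕ,
      (if n = 0 then 0 else A a (n - 1))
        + ∑ i ∈ Finset.range (p + 1), C (T (n + i) n) * A a (n + i) = X * A a n)
    (h : ℕ → ℝ)
    (hh : ∀ n, h n = (-1 : ℝ) ^ ((p - 1) * n) * ∏ i ∈ Finset.range n, T (i + p) i) :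
    ∀ N : ℕ,
      (∀ i : ℕ, 1 ≤ i → i ≤ p - 1 → Qp p A (N + i) N = 0) ∧
      (Qp p A N N = C (h N)⁻¹ * B N) ∧
      (Qp p A (N + p) N = C ((-1 : ℝ) ^ (p - 1) * (h (N + 1))⁻¹) * B (N + 1)) ∧
      (∀ j : Fin (N + 1),
        (∑ i : Fin (N + 1), Qp p A (i : ℕ) N * C (truncM T N i j))
          + (if (j : ℕ) = N then C (T (N + p) N) * Qp p A (N + p) N else 0)
          = X * Qp p A (j : ℕ) N) := by
  have : NeZero p := ⟨Nat.one_le_iff_ne_zero.mp hp⟩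
  obtain rfl : h = typeINorm p T := funext hh
  rw [Qp_eq_typeIDet]
  exact stmt_3_general ⟨hT1, hTsup, hTsub⟩ hTlow hB0 hBrec hAzero hAone hArec
end

section
/- (Christoffel coefficients positivity) Assume T^{[N]} admits a positive bidiagonal factorization T^{[N]} = L_1^{[N]} ⋯ L_p^{[N]} U^{[N]}, assume B_{N+1} has N+1 simple real zeros λ_1 > ⋯ > λ_{N+1}, and assume the initial condition matrix ν satisfies ν^{−⊤} = 𝓛·𝓒 for some upper unitriangular p×p matrix 𝓒 with nonnegative entries. Then all Christoffel numbers are positive: μ_{n,a} > 0 for all n ∈ {1,…,N+1} and a ∈ {1,…,p}. -/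
open Polynomial

noncomputable def nuMat (p : ℕ) (A : Fin p → ℕ → Polynomial ℝ) : Matrix (Fin p) (Fin p) ℝ :=
  Matrix.of fun j a : Fin p => (A a (j : ℕ)).coeff 0

noncomputable def wfun (p : ℕ) (A : Fin p → ℕ → Polynomial ℝ) (B : ℕ → Polynomial ℝ)
    (N : ℕ) (lam : Fin (N + 1) → ℝ) (k : Fin (N + 1)) (n : ℕ) : ℝ :=
  Polynomial.eval (lam k) (Qp p A n N) /
    ∑ l ∈ Finset.range (N + 1),
      Polynomial.eval (lam k) (Qp p A l N) * Polynomial.eval (lam k) (B l)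

noncomputable def mu (p : ℕ) (A : Fin p → ℕ → Polynomial ℝ) (B : ℕ → Polynomial ℝ)
    (N : ℕ) (lam : Fin (N + 1) → ℝ) (k : Fin (N + 1)) (a : Fin p) : ℝ :=
  ∑ b : Fin p, (nuMat p A)⁻¹ a b * wfun p A B N lam k (b : ℕ)

noncomputable def Lmat (p sz k : ℕ) (α : ℕ → ℝ) : Matrix (Fin sz) (Fin sz) ℝ :=
  Matrix.of fun i j : Fin sz => if (i : ℕ) = (j : ℕ) then 1
    else if (i : ℕ) = (j : ℕ) + 1 then α (k + 1 + (j : ℕ) * (p + 1)) else 0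

noncomputable def Umat (p sz : ℕ) (α : ℕ → ℝ) : Matrix (Fin sz) (Fin sz) ℝ :=
  Matrix.of fun i j : Fin sz => if (j : ℕ) = (i : ℕ) + 1 then 1
    else if (i : ℕ) = (j : ℕ) then α (1 + (i : ℕ) * (p + 1)) else 0

noncomputable def scrL (p : ℕ) (α : ℕ → ℝ) : Matrix (Fin p) (Fin p) ℝ :=
  Matrix.of fun i c : Fin p =>
    if (c : ℕ) = 0 then (if (i : ℕ) = 0 then (1 : ℝ) else 0)
    else (1 / ∏ t ∈ Finset.range (c : ℕ), α ((c : ℕ) + 1 + t * p)) *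
      Matrix.mulVec (((List.range' 1 (c : ℕ)).map fun j => Lmat p p j α).prod)
        (fun j : Fin p => if (j : ℕ) = 0 then 1 else 0) i

/-!
Let `w` be the left eigenvector of `L₁ ⋯ L_p U` with last entry `1`, the eigenvalue being kept as a
variable `X`. Reading `w L₁ ⋯ L_p U = X w` column by column from the right produces the entries of
all the partial products `w L₁ ⋯ L_c` from constant polynomials, one row at a time, by combinations
`X h_p - ∑ a_j h_j` with positive `a_j`; what is left over in column `0` is `B_{N+1}`. These
combinations preserve the signs of Wronskians at every real point, so `W(f, B_{N+1}) > 0` for the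
first entry `f` of each `w L₁ ⋯ L_c`. At a zero of `B_{N+1}` this says that `f` and `B_{N+1}'` have
the same sign.

At such a zero, `n ↦ w_n` and `n ↦ Q_{n,N}` are solutions of the type I recurrence vanishing at
`N + 1, …, N + p - 1`, hence proportional, and `∑ w_n B_n = B_{N+1}'`. So the row of the `w_{k,n}`
consists of the first `p` entries of `w / B_{N+1}'`. Multiplying it by `𝓛` gives positive multiples
of the numbers `f / B_{N+1}'` above, and multiplying further by `𝓒` the Christoffel numbers.
-/

open scoped Matrix

section Matrix

lemma det_updateRow_mul_dotProduct {n R : Type*} [Fintype n] [DecidableEq n] [CommRing R]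
    (M : Matrix n n R) (i : n) (c u v : n → R) (hc : ∀ j ≠ i, M j ⬝ᵥ c = 0) :
    (M.updateRow i u).det * (v ⬝ᵥ c) = (M.updateRow i v).det * (u ⬝ᵥ c) := by
  let d : n → R := fun k => (M.updateRow i (Pi.single k 1)).det
  have hadjugate (u : n → R) (k : n) : (M.updateRow i u).adjugate k i = d k := by
    rw [Matrix.adjugate_apply, Matrix.updateRow_idem]
  have hlaplace (u : n → R) : (M.updateRow i u).det = u ⬝ᵥ d := by
    simp [Matrix.det_eq_sum_mul_adjugate_row _ i, hadjugate, dotProduct]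
  have hcramer : (M.updateRow i u).det • c = (u ⬝ᵥ c) • d := by
    have hmul : M.updateRow i u *ᵥ c = Pi.single i (u ⬝ᵥ c) := by
      ext j
      rcases eq_or_ne j i with rfl | hj
      · simp [Matrix.mulVec]
      · simp [Matrix.mulVec, hj, hc j hj]
    rw [← Matrix.one_mulVec c, ← Matrix.smul_mulVec, ← Matrix.adjugate_mul, ← Matrix.mulVec_mulVec,
      hmul]
    ext k
    simp [Matrix.mulVec_single, hadjugate, mul_comm]
  rw [← smul_eq_mul, ← dotProduct_smul, hcramer, hlaplace v, dotProduct_smul, smul_eq_mul,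
    mul_comm]

lemma vecMul_pos {m n R : Type*} [Fintype m] [Semiring R] [PartialOrder R]
    [IsStrictOrderedRing R] {v : m → R} {M : Matrix m n R} {i : m} {j : n} (hv : ∀ i, 0 < v i)
    (hM : ∀ i, 0 ≤ M i j) (hij : 0 < M i j) : 0 < (v ᵥ* M) j :=
  Finset.sum_pos' (fun i _ => mul_nonneg (hv i).le (hM i))
    ⟨i, Finset.mem_univ i, mul_pos (hv i) hij⟩

end Matrix

section Pairing

variable {R ι : Type*} [CommRing R] [Fintype ι] [DecidableEq ι] {M : Matrix ι ι R} {s t : ι}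
  {P Q : R[X]} {w b : ι → R[X]}

lemma eq_of_vecMul_eq_of_mulVec_eq (hw : w ᵥ* C.mapMatrix M = (X : R[X]) • w - Pi.single s P)
    (hb : C.mapMatrix M *ᵥ b = (X : R[X]) • b - Pi.single t Q) (hwt : w t = 1) (hbs : b s = 1) :
    P = Q := by
  have hassoc := Matrix.dotProduct_mulVec w (C.mapMatrix M) b
  rw [hw, hb, dotProduct_sub, sub_dotProduct, dotProduct_smul, smul_dotProduct, dotProduct_single,
    single_dotProduct, hwt, hbs, one_mul, mul_one] at hassoc
  exact (sub_right_injective hassoc).symm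

/-- Differentiate the equation for `b` and pair it with `w`: the derivatives of `b` cancel. -/
lemma dotProduct_eq_derivative_of_vecMul_eq_of_mulVec_eq
    (hw : w ᵥ* C.mapMatrix M = (X : R[X]) • w - Pi.single s P)
    (hb : C.mapMatrix M *ᵥ b = (X : R[X]) • b - Pi.single t Q) (hwt : w t = 1) (hbs : b s = 1) :
    w ⬝ᵥ b = derivative Q := by
  have hb' : C.mapMatrix M *ᵥ (fun i => derivative (b i))
      = b + (X : R[X]) • (fun i => derivative (b i)) - Pi.single t (derivative Q) := by
    ext1 i
    have hi := congrArg derivative (congrFun hb i)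
    simp only [Matrix.mulVec, dotProduct, RingHom.mapMatrix_apply, Matrix.map_apply,
      derivative_sum, derivative_C_mul] at hi
    simp only [Matrix.mulVec, dotProduct, RingHom.mapMatrix_apply, Matrix.map_apply, hi]
    rcases eq_or_ne i t with rfl | hit <;> simp [*]
  have hassoc := Matrix.dotProduct_mulVec w (C.mapMatrix M) fun i => derivative (b i)
  rw [hw, hb', dotProduct_sub, dotProduct_add, sub_dotProduct, dotProduct_smul, smul_dotProduct,
    dotProduct_single, single_dotProduct, hwt, hbs, derivative_one, one_mul, mul_zero] at hassoc
  linear_combination hassoc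

end Pairing

section Wronskian

section CommRing

variable {R : Type*} [CommRing R]

/-- The value at `x` of the Wronskian of two polynomials, as a bilinear form. -/
noncomputable def evalWronskian (x : R) : R[X] →ₗ[R] R[X] →ₗ[R] R :=
  (wronskianBilin R).compr₂ (leval x)

lemma evalWronskian_apply (x : R) (f g : R[X]) :
    evalWronskian x f g
      = eval x f * eval x (derivative g) - eval x (derivative f) * eval x g := by
  simp [evalWronskian, wronskian]

lemma evalWronskian_self (x : R) (f : R[X]) : evalWronskian x f f = 0 := by
  simp [evalWronskian, wronskian_self_eq_zero]

lemma neg_evalWronskian (x : R) (f g : R[X]) : -evalWronskian x f g = evalWronskian x g f := by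
  simp only [evalWronskian_apply]; ring

lemma evalWronskian_X_mul_right (x : R) (f g : R[X]) :
    evalWronskian x f (X * g) = eval x f * eval x g + x * evalWronskian x f g := by
  simp only [evalWronskian_apply, derivative_mul, derivative_X, eval_add, eval_mul, eval_X,
    eval_one]
  ring

lemma evalWronskian_X_mul_self (x : R) (f : R[X]) :
    evalWronskian x f (X * f) = eval x f ^ 2 := by
  rw [evalWronskian_X_mul_right, evalWronskian_self]
  ring

lemma evalWronskian_X_mul_X_mul (x : R) (f g : R[X]) :
    evalWronskian x (X * f) (X * g) = x ^ 2 * evalWronskian x f g := by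
  simp only [evalWronskian_apply, derivative_mul, derivative_X, eval_add, eval_mul, eval_X,
    eval_one]
  ring

lemma evalWronskian_sum_smul_right (x : R) (s : Finset ℕ) (a : ℕ → R) (h : ℕ → R[X]) (f : R[X]) :
    evalWronskian x f (∑ j ∈ s, a j • h j) = -∑ j ∈ s, a j * evalWronskian x (h j) f := by
  simp only [map_sum, map_smul, smul_eq_mul, ← neg_evalWronskian x f, mul_neg,
    Finset.sum_neg_distrib, neg_neg]

/-- One period of the recursion satisfied by the entries of `w, wL₁, …, wL₁⋯L_p` for a left
eigenvector `w` of a bidiagonal product `L₁⋯L_pU`: from the entries `h 0, …, h p` at one row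
(in decreasing order of the number of factors `Lᵢ`) it produces those at the row above. -/
noncomputable def bidiagonalStep (p : ℕ) (a : ℕ → R) (h : ℕ → R[X]) (k : ℕ) : R[X] :=
  X * h p - ∑ j ∈ Finset.range (k + 1), a j • h j

lemma bidiagonalStep_succ (p : ℕ) (a : ℕ → R) (h : ℕ → R[X]) (k : ℕ) :
    bidiagonalStep p a h (k + 1) = bidiagonalStep p a h k - a (k + 1) • h (k + 1) := by
  simp only [bidiagonalStep, Finset.sum_range_succ _ (k + 1)]
  ring

lemma bidiagonalStep_eq_sub_sum_Ico (p : ℕ) (a : ℕ → R) (h : ℕ → R[X]) {i k : ℕ} (hik : i ≤ k) :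
    bidiagonalStep p a h k
      = bidiagonalStep p a h i - ∑ j ∈ Finset.Ico (i + 1) (k + 1), a j • h j := by
  simp only [bidiagonalStep,
    ← Finset.sum_range_add_sum_Ico (fun j => a j • h j) (Nat.add_le_add_right hik 1)]
  ring

lemma evalWronskian_bidiagonalStep (x : R) (p : ℕ) (a : ℕ → R) (h : ℕ → R[X]) (f : R[X]) (k : ℕ) :
    evalWronskian x f (bidiagonalStep p a h k) = evalWronskian x f (X * h p)
      + ∑ j ∈ Finset.range (k + 1), a j * evalWronskian x (h j) f := by
  rw [bidiagonalStep, map_sub, evalWronskian_sum_smul_right, sub_neg_eq_add]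

lemma evalWronskian_bidiagonalStep_bidiagonalStep (x : R) (p : ℕ) (a : ℕ → R) (h : ℕ → R[X])
    {i k : ℕ} (hik : i ≤ k) :
    evalWronskian x (bidiagonalStep p a h i) (bidiagonalStep p a h k)
      = ∑ j ∈ Finset.Ico (i + 1) (k + 1), a j * evalWronskian x (h j) (bidiagonalStep p a h i) := by
  rw [bidiagonalStep_eq_sub_sum_Ico p a h hik, map_sub, evalWronskian_self,
    evalWronskian_sum_smul_right, zero_sub, neg_neg]

lemma evalWronskian_bidiagonalStep_X_mul_bidiagonalStep (x : R) (p : ℕ) (a : ℕ → R) (h : ℕ → R[X])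
    {i k : ℕ} (hik : i ≤ k) :
    evalWronskian x (bidiagonalStep p a h i) (X * bidiagonalStep p a h k)
      = eval x (bidiagonalStep p a h i) ^ 2 + ∑ j ∈ Finset.Ico (i + 1) (k + 1),
          a j * evalWronskian x (X * h j) (bidiagonalStep p a h i) := by
  simp only [bidiagonalStep_eq_sub_sum_Ico p a h hik, mul_sub, Finset.mul_sum, mul_smul_comm,
    map_sub, evalWronskian_X_mul_self, evalWronskian_sum_smul_right x _ a, sub_neg_eq_add]

end CommRing

variable {R : Type*} [CommRing R] [LinearOrder R] [IsStrictOrderedRing R]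

/-- A form of interlacing of `h 0, …, h p` local to the point `x`: signs of Wronskians replace
positions of zeros, so no real-rootedness is involved. -/
structure WronskianInterlacing (x : R) (p : ℕ) (h : ℕ → R[X]) : Prop where
  nonneg : ∀ ⦃i j⦄, i ≤ j → j ≤ p → 0 ≤ evalWronskian x (h i) (h j)
  X_mul_pos : ∀ ⦃i j⦄, i < j → j ≤ p → 0 < evalWronskian x (h i) (X * h j)

namespace WronskianInterlacing

variable {x : R} {p : ℕ} {a : ℕ → R} {h : ℕ → R[X]}

lemma one (x : R) (p : ℕ) : WronskianInterlacing x p fun _ => 1 where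
  nonneg := by simp [evalWronskian_self]
  X_mul_pos := by simp [evalWronskian_apply]

lemma X_mul_nonneg (H : WronskianInterlacing x p h) {i j : ℕ} (hij : i ≤ j) (hj : j ≤ p) :
    0 ≤ evalWronskian x (h i) (X * h j) := by
  rcases hij.eq_or_lt with rfl | hlt
  · rw [evalWronskian_X_mul_self]
    exact sq_nonneg _
  · exact (H.X_mul_pos hlt hj).le

lemma bidiagonalStep_nonneg (H : WronskianInterlacing x p h) (ha : ∀ j ≤ p, 0 < a j) {i k : ℕ}
    (hki : k ≤ i) (hi : i ≤ p) : 0 ≤ evalWronskian x (h i) (bidiagonalStep p a h k) := by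
  rw [evalWronskian_bidiagonalStep]
  refine add_nonneg (H.X_mul_nonneg hi le_rfl) (Finset.sum_nonneg fun j hj => ?_)
  rw [Finset.mem_range] at hj
  exact mul_nonneg (ha j (by lia)).le (H.nonneg (by lia) hi)

lemma X_mul_bidiagonalStep_pos (H : WronskianInterlacing x p h) (ha : ∀ j ≤ p, 0 < a j)
    {i k : ℕ} (hki : k < i) (hi : i ≤ p) :
    0 < evalWronskian x (X * h i) (bidiagonalStep p a h k) := by
  rw [evalWronskian_bidiagonalStep, evalWronskian_X_mul_X_mul]
  refine add_pos_of_nonneg_of_pos (mul_nonneg (sq_nonneg x) (H.nonneg hi le_rfl))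
    (Finset.sum_pos (fun j hj => ?_) (by simp))
  rw [Finset.mem_range] at hj
  exact mul_pos (ha j (by lia)) (H.X_mul_pos (by lia) hi)

lemma bidiagonalStep_zero_pos (hp : p ≠ 0) (H : WronskianInterlacing x p h) (ha : 0 < a 0)
    {i : ℕ} (hi : i ≤ p) : 0 < evalWronskian x (h i) (bidiagonalStep p a h 0) := by
  have hexpand : evalWronskian x (h i) (bidiagonalStep p a h 0)
      = evalWronskian x (h i) (X * h p) + a 0 * evalWronskian x (h 0) (h i) := by
    simp [evalWronskian_bidiagonalStep]
  have h0i : 0 ≤ evalWronskian x (h 0) (h i) := H.nonneg i.zero_le hi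
  rw [hexpand]
  rcases hi.eq_or_lt with rfl | hlt
  · have h0p := H.X_mul_pos (Nat.pos_of_ne_zero hp) le_rfl
    rw [evalWronskian_X_mul_right] at h0p
    rw [evalWronskian_X_mul_self]
    rcases h0i.eq_or_lt with h0 | hpos
    · rw [← h0, mul_zero, add_zero] at h0p ⊢
      have := right_ne_zero_of_mul h0p.ne'
      positivity
    · positivity
  · exact add_pos_of_pos_of_nonneg (H.X_mul_pos hlt le_rfl) (mul_nonneg ha.le h0i)

lemma bidiagonalStep (H : WronskianInterlacing x p h) (ha : ∀ j ≤ p, 0 < a j) :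
    WronskianInterlacing x p (bidiagonalStep p a h) where
  nonneg i k hik hk := by
    rw [evalWronskian_bidiagonalStep_bidiagonalStep x p a h hik]
    refine Finset.sum_nonneg fun j hj => ?_
    rw [Finset.mem_Ico] at hj
    exact mul_nonneg (ha j (by lia)).le (H.bidiagonalStep_nonneg ha (by lia) (by lia))
  X_mul_pos i k hik hk := by
    rw [evalWronskian_bidiagonalStep_X_mul_bidiagonalStep x p a h hik.le]
    refine add_pos_of_nonneg_of_pos (sq_nonneg _)
      (Finset.sum_pos (fun j hj => ?_) (Finset.nonempty_Ico.2 (by lia)))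
    rw [Finset.mem_Ico] at hj
    exact mul_pos (ha j (by lia)) (H.X_mul_bidiagonalStep_pos ha (by lia) (by lia))

end WronskianInterlacing

end Wronskian

section LeftVector

variable {R : Type*} [CommRing R]

/-- For an `(N + 1) × (N + 1)` bidiagonal product with parameters `α`, the polynomials obtained
from the last row, where they are all `1`, by `n` periods of the bidiagonal recursion. The
subtractions are truncated only in values that are never used. -/
noncomputable def bidiagonalPoly (p : ℕ) (α : ℕ → R) (N : ℕ) : ℕ → ℕ → R[X]
  | 0 => fun _ => 1
  | n + 1 => bidiagonalStep p (fun k => α ((N - n) * (p + 1) + 1 - k)) (bidiagonalPoly p α N n)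

/-- The row vector `w L₁ ⋯ L_c`, where `w` is the left eigenvector of `L₁ ⋯ L_p U` normalized by
`w N = 1`; here the eigenvalue is the variable `X`. Entries beyond `N` are zero. -/
noncomputable def leftPoly (p : ℕ) (α : ℕ → R) (N c r : ℕ) : R[X] :=
  if r ≤ N then bidiagonalPoly p α N (N - r) (p - c) else 0

lemma leftPoly_self (p : ℕ) (α : ℕ → R) (N c : ℕ) : leftPoly p α N c N = 1 := by
  simp [leftPoly, bidiagonalPoly]

lemma leftPoly_eq_zero (p : ℕ) (α : ℕ → R) {N r : ℕ} (c : ℕ) (hr : N < r) :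
    leftPoly p α N c r = 0 :=
  if_neg hr.not_ge

lemma leftPoly_succ {p c : ℕ} (hc : c < p) (α : ℕ → R) (N r : ℕ) :
    leftPoly p α N (c + 1) r
      = leftPoly p α N c r + α (c + 2 + r * (p + 1)) • leftPoly p α N c (r + 1) := by
  rcases lt_trichotomy r N with hr | rfl | hr
  · obtain ⟨n, rfl⟩ : ∃ n, N = n + (r + 1) := ⟨N - (r + 1), by lia⟩
    obtain ⟨k, rfl⟩ : ∃ k, p = k + (c + 1) := ⟨p - (c + 1), by lia⟩
    have hindex : (r + 1) * (k + (c + 1) + 1) + 1 - (k + 1) = c + 2 + r * (k + (c + 1) + 1) := by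
      rw [add_one_mul]; lia
    have hrow : n + (r + 1) - r = n + 1 := by lia
    have hcol : k + (c + 1) - c = k + 1 := by lia
    rw [leftPoly, leftPoly, leftPoly, if_pos (by lia), if_pos (by lia), if_pos (by lia), hrow, hcol,
      Nat.add_sub_cancel, Nat.add_sub_cancel, bidiagonalPoly, bidiagonalStep_succ,
      Nat.add_sub_cancel_left, hindex, sub_add_cancel]
  · rw [leftPoly_eq_zero p α c r.lt_succ_self, leftPoly_self, leftPoly_self, smul_zero, add_zero]
  · simp only [leftPoly_eq_zero p α _ hr, leftPoly_eq_zero p α _ (hr.trans r.lt_succ_self),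
      smul_zero, add_zero]

lemma X_mul_leftPoly_zero (p : ℕ) (α : ℕ → R) (N : ℕ) :
    X * leftPoly p α N 0 0
      = α 1 • leftPoly p α N p 0 + bidiagonalPoly p α N (N + 1) 0 := by
  simp [leftPoly, bidiagonalPoly, bidiagonalStep]

lemma X_mul_leftPoly_succ (p : ℕ) (α : ℕ → R) {N r : ℕ} (hr : r < N) :
    X * leftPoly p α N 0 (r + 1)
      = α (1 + (r + 1) * (p + 1)) • leftPoly p α N p (r + 1) + leftPoly p α N p r := by
  obtain ⟨n, rfl⟩ : ∃ n, N = n + (r + 1) := ⟨N - (r + 1), by lia⟩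
  have hrow : n + (r + 1) - r = n + 1 := by lia
  rw [leftPoly, leftPoly, leftPoly, if_pos (by lia), if_pos (by lia), if_pos (by lia), hrow,
    Nat.add_sub_cancel, bidiagonalPoly, bidiagonalStep]
  simp [add_comm 1]

lemma wronskianInterlacing_bidiagonalPoly [LinearOrder R] [IsStrictOrderedRing R] (x : R) (p : ℕ)
    {α : ℕ → R} (hα : ∀ i, 1 ≤ i → 0 < α i) {N n : ℕ} (hn : n ≤ N) :
    WronskianInterlacing x p (bidiagonalPoly p α N n) := by
  induction n with
  | zero => exact .one x p
  | succ n ih =>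
    refine (ih (by lia)).bidiagonalStep fun j hj => hα _ ?_
    have : 1 * (p + 1) ≤ (N - n) * (p + 1) := Nat.mul_le_mul_right _ (by lia)
    lia

lemma evalWronskian_leftPoly_pos [LinearOrder R] [IsStrictOrderedRing R] (x : R) {p : ℕ}
    (hp : p ≠ 0) {α : ℕ → R} (hα : ∀ i, 1 ≤ i → 0 < α i) (N c : ℕ) :
    0 < evalWronskian x (leftPoly p α N c 0) (bidiagonalPoly p α N (N + 1) 0) := by
  rw [leftPoly, if_pos N.zero_le, Nat.sub_zero, bidiagonalPoly]
  refine (wronskianInterlacing_bidiagonalPoly x p hα le_rfl).bidiagonalStep_zero_pos hp ?_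
    (Nat.sub_le p c)
  exact hα _ (Nat.le_add_left 1 _)

lemma leftPoly_div_derivative_pos {K : Type*} [Field K] [LinearOrder K] [IsStrictOrderedRing K]
    {p : ℕ} (hp : p ≠ 0) {α : ℕ → K} (hα : ∀ i, 1 ≤ i → 0 < α i) {N : ℕ} {x : K}
    (hx : eval x (bidiagonalPoly p α N (N + 1) 0) = 0) (c : ℕ) :
    0 < eval x (leftPoly p α N c 0) / eval x (derivative (bidiagonalPoly p α N (N + 1) 0)) := by
  have hpos := evalWronskian_leftPoly_pos x hp hα N c
  rw [evalWronskian_apply, hx, mul_zero, sub_zero] at hpos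
  exact div_pos_iff.2 (mul_pos_iff.1 hpos)

end LeftVector

section BidiagonalFactors

lemma vecMul_Lmat (p k : ℕ) {sz : ℕ} (α : ℕ → ℝ) (v : Fin sz → ℝ[X]) (r : Fin sz) :
    (v ᵥ* C.mapMatrix (Lmat p sz k α)) r
      = v r + if h : (r : ℕ) + 1 < sz then α (k + 1 + r * (p + 1)) • v ⟨r + 1, h⟩ else 0 := by
  have hentry (i : Fin sz) : v i * C (Lmat p sz k α i r)
      = (if i = r then v i else 0)
        + if (i : ℕ) = r + 1 then α (k + 1 + r * (p + 1)) • v i else 0 := by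
    simp only [Lmat, Matrix.of_apply, Fin.ext_iff]
    split_ifs with h₁ h₂ <;> first | (exfalso; lia) | simp [smul_eq_C_mul, mul_comm]
  simp only [Matrix.vecMul, dotProduct, RingHom.mapMatrix_apply, Matrix.map_apply, hentry,
    Finset.sum_add_distrib, Fintype.sum_ite_eq']
  congr 1
  split_ifs with h
  · rw [Fintype.sum_eq_single ⟨r + 1, h⟩ fun i hi => if_neg fun hir => hi (Fin.ext hir)]
    exact if_pos rfl
  · exact Finset.sum_eq_zero fun i _ => if_neg (by lia)

lemma vecMul_Umat (p : ℕ) {sz : ℕ} (α : ℕ → ℝ) (v : ℕ → ℝ[X]) (r : Fin sz) :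
    ((fun i : Fin sz => v i) ᵥ* C.mapMatrix (Umat p sz α)) r
      = α (1 + r * (p + 1)) • v r + if (r : ℕ) = 0 then 0 else v (r - 1) := by
  have hentry (i : Fin sz) : v i * C (Umat p sz α i r)
      = (if i = r then α (1 + r * (p + 1)) • v r else 0)
        + if (r : ℕ) = i + 1 then v i else 0 := by
    simp only [Umat, Matrix.of_apply, Fin.ext_iff]
    split_ifs with h₁ h₂ h₂ <;> first | (exfalso; lia) | simp [smul_eq_C_mul, mul_comm, *]
  simp only [Matrix.vecMul, dotProduct, RingHom.mapMatrix_apply, Matrix.map_apply, hentry,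
    Finset.sum_add_distrib, Fintype.sum_ite_eq']
  congr 1
  split_ifs with h
  · exact Finset.sum_eq_zero fun i _ => if_neg (by lia)
  · rw [Fintype.sum_eq_single ⟨r - 1, by lia⟩ fun i hi => if_neg fun hir => hi (Fin.ext (by grind))]
    exact if_pos (by grind)

/-- Entry `r` only sees the rows `r, …, r + c`, so that cutting the matrices down to size `sz` does
no harm if `leftPoly` vanishes from `sz` on or if `r + c < sz`. -/
lemma vecMul_leftPoly_prod_Lmat {p N sz c : ℕ} (α : ℕ → ℝ) (hc : c ≤ p) (r : Fin sz)
    (hr : N < sz ∨ (r : ℕ) + c < sz) :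
    ((fun i : Fin sz => leftPoly p α N 0 i)
      ᵥ* C.mapMatrix ((List.range c).map fun k => Lmat p sz (k + 1) α).prod) r
      = leftPoly p α N c r := by
  induction c generalizing r with
  | zero => simp
  | succ c ih =>
    rw [List.range_succ, List.map_append, List.prod_append, List.map_singleton,
      List.prod_singleton, map_mul, ← Matrix.vecMul_vecMul, vecMul_Lmat,
      ih (by lia) r (by lia), leftPoly_succ hc]
    congr 1
    split_ifs with h
    · rw [ih (by lia) ⟨r + 1, h⟩ (by simp only; lia)]
    · rw [leftPoly_eq_zero p α c (by lia), smul_zero]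

lemma vecMul_leftPoly_truncM {p N : ℕ} {T : ℕ → ℕ → ℝ} {α : ℕ → ℝ}
    (hfact : truncM T N =
      (((List.range p).map fun k => Lmat p (N + 1) (k + 1) α).prod) * Umat p (N + 1) α) :
    (fun i : Fin (N + 1) => leftPoly p α N 0 i) ᵥ* C.mapMatrix (truncM T N)
      = (X : ℝ[X]) • (fun i : Fin (N + 1) => leftPoly p α N 0 i)
        - Pi.single 0 (bidiagonalPoly p α N (N + 1) 0) := by
  have hprod : (fun i : Fin (N + 1) => leftPoly p α N 0 i)
      ᵥ* C.mapMatrix ((List.range p).map fun k => Lmat p (N + 1) (k + 1) α).prod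
      = fun i : Fin (N + 1) => leftPoly p α N p i :=
    funext fun r => vecMul_leftPoly_prod_Lmat α le_rfl r (.inl N.lt_succ_self)
  ext1 r
  rw [hfact, map_mul, ← Matrix.vecMul_vecMul, hprod, vecMul_Umat p α fun i => leftPoly p α N p i]
  refine Fin.cases ?_ (fun r => ?_) r
  · simp [X_mul_leftPoly_zero]
  · simp [X_mul_leftPoly_succ p α r.isLt]

end BidiagonalFactors

section TypeII

variable {R : Type*} [CommRing R] {p : ℕ} {T : ℕ → ℕ → R} {B : ℕ → R[X]}

lemma X_mul_typeII (hT1 : ∀ n, T n (n + 1) = 1) (hTsub : ∀ n m, m + p < n → T n m = 0)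
    (hBrec : ∀ n, B (n + 1) = (X - C (T n n)) * B n
      - ∑ j ∈ Finset.Icc 1 p, (if j ≤ n then C (T n (n - j)) * B (n - j) else 0)) (n : ℕ) :
    X * B n = ∑ m ∈ Finset.range (n + 2), C (T n m) * B m := by
  have hlower : ∑ j ∈ Finset.Icc 1 p, (if j ≤ n then C (T n (n - j)) * B (n - j) else 0)
      = ∑ m ∈ Finset.range n, C (T n m) * B m := by
    rw [← Finset.sum_filter,
      ← Finset.sum_filter_of_ne (s := Finset.range n) (p := fun m => n ≤ m + p)]
    · refine Finset.sum_nbij' (n - ·) (n - ·) ?_ ?_ ?_ ?_ fun _ _ => rfl <;>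
        simp only [Finset.mem_filter, Finset.mem_Icc, Finset.mem_range] <;> lia
    · intro m _ hm
      by_contra! hlt
      exact hm (by rw [hTsub n m hlt, C_0, zero_mul])
  rw [Finset.sum_range_succ, Finset.sum_range_succ, ← hlower, hT1, hBrec n, C_1]
  ring

end TypeII

lemma mulVec_truncM_typeII {T : ℕ → ℕ → ℝ} {B : ℕ → ℝ[X]} (hT1 : ∀ n, T n (n + 1) = 1)
    (hTsup : ∀ n m, n + 1 < m → T n m = 0)
    (hB : ∀ n, X * B n = ∑ m ∈ Finset.range (n + 2), C (T n m) * B m) (N : ℕ) :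
    C.mapMatrix (truncM T N) *ᵥ (fun i : Fin (N + 1) => B i)
      = (X : ℝ[X]) • (fun i : Fin (N + 1) => B i) - Pi.single (Fin.last N) (B (N + 1)) := by
  have hrow (n : ℕ) (hn : n ≤ N) : X * B n = ∑ m ∈ Finset.range (N + 2), C (T n m) * B m := by
    rw [hB n]
    refine Finset.sum_subset (by gcongr) fun m _ hm => ?_
    rw [hTsup n m (by rw [Finset.mem_range] at hm; lia), C_0, zero_mul]
  ext1 i
  have hsum : (C.mapMatrix (truncM T N) *ᵥ fun i : Fin (N + 1) => B i) i
      = ∑ m ∈ Finset.range (N + 1), C (T i m) * B m := by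
    rw [Finset.sum_range]
    rfl
  rw [hsum, Pi.sub_apply, Pi.smul_apply, smul_eq_mul, hrow i i.is_le,
    Finset.sum_range_succ _ (N + 1)]
  rcases i.is_le.eq_or_lt with hi | hi
  · obtain rfl : i = Fin.last N := Fin.ext hi
    simp [hT1]
  · rw [Pi.single_eq_of_ne (Fin.ne_of_lt hi), hTsup i (N + 1) (by lia), C_0, zero_mul, add_zero,
      sub_zero]

section TypeI

variable {R : Type*} [CommRing R] {p N : ℕ} {T : ℕ → ℕ → R} {x : R}

/-- The row vectors `u` satisfying the columns `0, …, N - 1` of `u T = x u`, where `p` is the number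
of subdiagonals of `T`, so that column `n` ends at row `n + p`. When `T` is lower Hessenberg this is
the recurrence of the type I polynomials at `x`. -/
def typeISolutions (p N : ℕ) (T : ℕ → ℕ → R) (x : R) : Submodule R (ℕ → R) where
  carrier := {u | ∀ n < N, ∑ m ∈ Finset.range (n + p + 1), u m * T m n = x * u n}
  add_mem' hu hv n hn := by
    simp only [Pi.add_apply, add_mul, Finset.sum_add_distrib, mul_add, hu n hn, hv n hn]
  zero_mem' n _ := by simp
  smul_mem' c u hu n hn := by
    simp only [Pi.smul_apply, smul_eq_mul, mul_assoc c, ← Finset.mul_sum, hu n hn]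
    ring

lemma eq_zero_of_mem_typeISolutions [NoZeroDivisors R] (hp : p ≠ 0)
    (hTlow : ∀ n, T (n + p) n ≠ 0) {u : ℕ → R} (hu : u ∈ typeISolutions p N T x)
    (hinit : ∀ m < p, u m = 0) {m : ℕ} (hm : m < N + p) : u m = 0 := by
  induction m using Nat.strong_induction_on with
  | _ m ih =>
    rcases lt_or_ge m p with hmp | hmp
    · exact hinit m hmp
    obtain ⟨n, rfl⟩ : ∃ n, m = n + p := ⟨m - p, by lia⟩
    have hsum : ∑ m ∈ Finset.range (n + p), u m * T m n = 0 := Finset.sum_eq_zero fun m hm => by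
      rw [Finset.mem_range] at hm
      rw [ih m hm (by lia), zero_mul]
    have hn := hu n (by lia)
    rw [Finset.sum_range_succ, hsum, zero_add, ih n (by lia) (by lia), mul_zero] at hn
    exact (mul_eq_zero.1 hn).resolve_right (hTlow n)

lemma sum_range_mul_superdiagonal (hT1 : ∀ n, T n (n + 1) = 1)
    (hTsup : ∀ n m, n + 1 < m → T n m = 0) (u : ℕ → R) (n : ℕ) :
    ∑ m ∈ Finset.range n, u m * T m n = if n = 0 then 0 else u (n - 1) := by
  cases n with
  | zero => simp
  | succ n =>
    rw [Finset.sum_range_succ, hT1, mul_one, if_neg n.succ_ne_zero, Nat.add_sub_cancel,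
      add_eq_right]
    refine Finset.sum_eq_zero fun m hm => ?_
    rw [Finset.mem_range] at hm
    rw [hTsup m (n + 1) (by lia), mul_zero]

lemma eval_typeI_mem_typeISolutions (hT1 : ∀ n, T n (n + 1) = 1)
    (hTsup : ∀ n m, n + 1 < m → T n m = 0) {A : ℕ → R[X]}
    (hArec : ∀ n, (if n = 0 then 0 else A (n - 1))
      + ∑ i ∈ Finset.range (p + 1), C (T (n + i) n) * A (n + i) = X * A n) (N : ℕ) (x : R) :
    (fun m => eval x (A m)) ∈ typeISolutions p N T x := by
  intro n _
  have hn := congrArg (eval x) (hArec n)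
  simp only [eval_add, apply_ite (eval x), eval_zero, eval_finsetSum, eval_mul, eval_C, eval_X]
    at hn
  rw [add_assoc, Finset.sum_range_add, sum_range_mul_superdiagonal hT1 hTsup, ← hn]
  simp only [mul_comm]

lemma mem_typeISolutions_of_sum_range (hTsub : ∀ n m, m + p < n → T n m = 0) {u : ℕ → R}
    (hu : ∀ m, N < m → u m = 0)
    (hsum : ∀ n < N, ∑ m ∈ Finset.range (N + 1), u m * T m n = x * u n) :
    u ∈ typeISolutions p N T x := by
  intro n hn
  rw [← hsum n hn]
  refine Finset.sum_congr_of_eq_on_inter ?_ ?_ fun _ _ _ => rfl <;> intro m hm hm' <;>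
    rw [Finset.mem_range] at hm hm'
  · rw [hu m (by lia), zero_mul]
  · rw [hTsub m n (by lia), mul_zero]

end TypeI

section InitialConditions

variable {p N : ℕ} {A : Fin p → ℕ → ℝ[X]}

lemma isUnit_det_nuMat (hAzero : ∀ a : Fin p, ∀ j : ℕ, j < (a : ℕ) → A a j = 0)
    (hAone : ∀ a : Fin p, A a (a : ℕ) = 1) : IsUnit (nuMat p A).det := by
  have htri : (nuMat p A).BlockTriangular OrderDual.toDual := fun j a hja => by
    simp [nuMat, hAzero a j hja]
  rw [Matrix.det_of_isLowerTriangular _ htri]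
  simp [nuMat, hAone]

lemma typeI_dotProduct_nuMat_inv_mulVec {T : ℕ → ℕ → ℝ} {x : ℝ} (hp : p ≠ 0)
    (hTlow : ∀ n, T (n + p) n ≠ 0) (hAconst : ∀ a : Fin p, ∀ j < p, ∃ c : ℝ, A a j = C c)
    (hν : IsUnit (nuMat p A).det)
    (hA : ∀ a, (fun m => eval x (A a m)) ∈ typeISolutions p N T x) {u : ℕ → ℝ}
    (hu : u ∈ typeISolutions p N T x) {m : ℕ} (hm : m < N + p) :
    (fun a => eval x (A a m)) ⬝ᵥ ((nuMat p A)⁻¹ *ᵥ fun b : Fin p => u b) = u m := by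
  set c := (nuMat p A)⁻¹ *ᵥ fun b : Fin p => u b with hc
  have hdiff : (∑ a, c a • fun m => eval x (A a m)) - u ∈ typeISolutions p N T x :=
    sub_mem (sum_mem fun a _ => Submodule.smul_mem _ _ (hA a)) hu
  have hinit (j : ℕ) (hj : j < p) : ((∑ a, c a • fun m => eval x (A a m)) - u) j = 0 := by
    have hνc : nuMat p A *ᵥ c = fun b : Fin p => u b := by
      rw [hc, Matrix.mulVec_mulVec, Matrix.mul_nonsing_inv _ hν, Matrix.one_mulVec]
    have hentry (a : Fin p) : eval x (A a j) = nuMat p A ⟨j, hj⟩ a := by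
      obtain ⟨y, hy⟩ := hAconst a j hj
      simp [nuMat, hy]
    simpa [hentry, mul_comm, sub_eq_zero, Matrix.mulVec, dotProduct]
      using congrFun hνc ⟨j, hj⟩
  simpa [dotProduct, mul_comm, sub_eq_zero] using
    eq_zero_of_mem_typeISolutions hp hTlow hdiff hinit hm

end InitialConditions

section ChristoffelNumbers

variable {p N : ℕ} {T : ℕ → ℕ → ℝ} {A : Fin p → ℕ → ℝ[X]} {α : ℕ → ℝ} {x : ℝ}

lemma eval_Qp (hp : 0 < p) (A : Fin p → ℕ → ℝ[X]) (n N : ℕ) (x : ℝ) :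
    eval x (Qp p A n N)
      = ((Matrix.of fun (i : Fin p) a => eval x (A a (N + i))).updateRow ⟨0, hp⟩
          fun a => eval x (A a n)).det := by
  rw [Qp, ← coe_evalRingHom, RingHom.map_det]
  congr 1
  ext i a
  rcases eq_or_ne i ⟨0, hp⟩ with rfl | hi
  · simp
  · have hi0 : (i : ℕ) ≠ 0 := fun h => hi (Fin.ext h)
    simp [hi, hi0]

lemma eval_Qp_mul_of_mem_typeISolutions (hp : 0 < p) (hTlow : ∀ n, T (n + p) n ≠ 0)
    (hAconst : ∀ a : Fin p, ∀ j < p, ∃ c : ℝ, A a j = C c) (hν : IsUnit (nuMat p A).det)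
    (hA : ∀ a, (fun m => eval x (A a m)) ∈ typeISolutions p N T x) {u : ℕ → ℝ}
    (hu : u ∈ typeISolutions p N T x) (hvanish : ∀ m, N < m → u m = 0) {m : ℕ} (hm : m < N + p) :
    eval x (Qp p A m N) * u N = eval x (Qp p A N N) * u m := by
  have hexpand {n : ℕ} (hn : n < N + p) :=
    typeI_dotProduct_nuMat_inv_mulVec hp.ne' hTlow hAconst hν hA hu hn
  rw [eval_Qp hp, eval_Qp hp, ← hexpand hm, ← hexpand (n := N) (by lia)]
  refine det_updateRow_mul_dotProduct _ _ _ _ _ fun j hj => ?_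
  have hj0 : (j : ℕ) ≠ 0 := fun h => hj (Fin.ext h)
  exact (hexpand (by lia)).trans (hvanish _ (by lia))

lemma eval_leftPoly_mem_typeISolutions (hTsub : ∀ n m, m + p < n → T n m = 0)
    (hfact : truncM T N =
      (((List.range p).map fun k => Lmat p (N + 1) (k + 1) α).prod) * Umat p (N + 1) α)
    (hx : eval x (bidiagonalPoly p α N (N + 1) 0) = 0) :
    (fun n => eval x (leftPoly p α N 0 n)) ∈ typeISolutions p N T x := by
  refine mem_typeISolutions_of_sum_range hTsub
    (fun m hm => by rw [leftPoly_eq_zero p α 0 hm, eval_zero]) fun n hn => ?_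
  have hcol := congrArg (eval x) (congrFun (vecMul_leftPoly_truncM hfact) ⟨n, by lia⟩)
  simp only [Matrix.vecMul, dotProduct, RingHom.mapMatrix_apply, Matrix.map_apply, truncM,
    Matrix.of_apply, eval_finsetSum, eval_mul, eval_C, Pi.sub_apply, Pi.smul_apply, smul_eq_mul,
    eval_sub, eval_X, Pi.single_apply, apply_ite (eval x), hx, eval_zero, ite_self, sub_zero]
    at hcol
  rw [Finset.sum_range, hcol]

lemma eval_Qp_eq_mul_eval_leftPoly (hp : 0 < p) (hT1 : ∀ n, T n (n + 1) = 1)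
    (hTsup : ∀ n m, n + 1 < m → T n m = 0) (hTsub : ∀ n m, m + p < n → T n m = 0)
    (hTlow : ∀ n, T (n + p) n ≠ 0) (hAconst : ∀ a : Fin p, ∀ j < p, ∃ c : ℝ, A a j = C c)
    (hν : IsUnit (nuMat p A).det)
    (hArec : ∀ a n, (if n = 0 then 0 else A a (n - 1))
      + ∑ i ∈ Finset.range (p + 1), C (T (n + i) n) * A a (n + i) = X * A a n)
    (hfact : truncM T N =
      (((List.range p).map fun k => Lmat p (N + 1) (k + 1) α).prod) * Umat p (N + 1) α)
    (hx : eval x (bidiagonalPoly p α N (N + 1) 0) = 0) {m : ℕ} (hm : m < N + p) :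
    eval x (Qp p A m N) = eval x (Qp p A N N) * eval x (leftPoly p α N 0 m) := by
  have hvanish (m : ℕ) (hNm : N < m) : eval x (leftPoly p α N 0 m) = 0 := by
    rw [leftPoly_eq_zero p α 0 hNm, eval_zero]
  have hprop := eval_Qp_mul_of_mem_typeISolutions hp hTlow hAconst hν
    (fun a => eval_typeI_mem_typeISolutions hT1 hTsup (hArec a) N x)
    (eval_leftPoly_mem_typeISolutions hTsub hfact hx) hvanish hm
  rwa [leftPoly_self, eval_one, mul_one] at hprop

lemma wfun_eq_div {B : ℕ → ℝ[X]} {lam : Fin (N + 1) → ℝ} {k : Fin (N + 1)} {u : ℕ → ℝ}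
    (hQ : ∀ m < N + p, eval (lam k) (Qp p A m N) = eval (lam k) (Qp p A N N) * u m)
    (hden : ∑ l ∈ Finset.range (N + 1),
      eval (lam k) (Qp p A l N) * eval (lam k) (B l) ≠ 0) (b : Fin p) :
    wfun p A B N lam k b = u b / ∑ l ∈ Finset.range (N + 1), u l * eval (lam k) (B l) := by
  have hsum : ∑ l ∈ Finset.range (N + 1), eval (lam k) (Qp p A l N) * eval (lam k) (B l)
      = eval (lam k) (Qp p A N N) * ∑ l ∈ Finset.range (N + 1), u l * eval (lam k) (B l) := by
    rw [Finset.mul_sum]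
    refine Finset.sum_congr rfl fun l hl => ?_
    have := b.pos
    rw [Finset.mem_range] at hl
    rw [hQ l (by lia), mul_assoc]
  rw [hsum] at hden
  rw [wfun, hsum, hQ b (by lia), mul_div_mul_left _ _ (left_ne_zero_of_mul hden)]

lemma mu_eq_vecMul {M : Matrix (Fin p) (Fin p) ℝ} (hM : (nuMat p A)⁻¹ᵀ = M) (B : ℕ → ℝ[X])
    (lam : Fin (N + 1) → ℝ) (k : Fin (N + 1)) (a : Fin p) :
    mu p A B N lam k a = ((fun b : Fin p => wfun p A B N lam k b) ᵥ* M) a := by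
  rw [← hM, Matrix.vecMul_transpose]
  rfl

lemma scrL_apply (p : ℕ) (α : ℕ → ℝ) (i c : Fin p) :
    scrL p α i c = (1 / ∏ t ∈ Finset.range (c : ℕ), α ((c : ℕ) + 1 + t * p))
      * ((List.range (c : ℕ)).map fun k => Lmat p p (k + 1) α).prod i ⟨0, c.pos⟩ := by
  have hlist : ((List.range' 1 (c : ℕ)).map fun j => Lmat p p j α)
      = (List.range (c : ℕ)).map fun k => Lmat p p (k + 1) α := by
    simp only [List.range'_eq_map_range, List.map_map, Function.comp_def, add_comm 1]
  have hsingle : (fun j : Fin p => if (j : ℕ) = 0 then (1 : ℝ) else 0)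
      = Pi.single ⟨0, c.pos⟩ 1 := by
    ext j
    simp [Pi.single_apply, Fin.ext_iff]
  rw [scrL, Matrix.of_apply, hlist, hsingle, Matrix.mulVec_single_one]
  split_ifs with hc hi <;> simp [Matrix.one_apply, Fin.ext_iff, *]

lemma vecMul_eval_leftPoly_scrL (N : ℕ) (x : ℝ) (c : Fin p) :
    ((fun b : Fin p => eval x (leftPoly p α N 0 b)) ᵥ* scrL p α) c
      = (1 / ∏ t ∈ Finset.range (c : ℕ), α ((c : ℕ) + 1 + t * p))
        * eval x (leftPoly p α N c 0) := by
  have hprod := congrArg (eval x)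
    (vecMul_leftPoly_prod_Lmat (N := N) α c.is_le' ⟨0, c.pos⟩ (.inr (by simp)))
  simp only [Matrix.vecMul, dotProduct, RingHom.mapMatrix_apply, Matrix.map_apply, eval_finsetSum,
    eval_mul, eval_C] at hprod
  rw [← hprod]
  simp only [Matrix.vecMul, dotProduct, scrL_apply, Finset.mul_sum, mul_left_comm]

lemma vecMul_leftPoly_div_derivative_scrL_pos (hα : ∀ i, 1 ≤ i → 0 < α i)
    (hx : eval x (bidiagonalPoly p α N (N + 1) 0) = 0) (c : Fin p) :
    0 < ((fun b : Fin p => eval x (leftPoly p α N 0 b)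
      / eval x (derivative (bidiagonalPoly p α N (N + 1) 0))) ᵥ* scrL p α) c := by
  have hdiv : (fun b : Fin p => eval x (leftPoly p α N 0 b)
      / eval x (derivative (bidiagonalPoly p α N (N + 1) 0)))
      = (eval x (derivative (bidiagonalPoly p α N (N + 1) 0)))⁻¹
        • fun b : Fin p => eval x (leftPoly p α N 0 b) := by
    ext b
    simp [div_eq_inv_mul]
  rw [hdiv, Matrix.smul_vecMul, Pi.smul_apply, vecMul_eval_leftPoly_scrL, smul_eq_mul,
    mul_left_comm, ← div_eq_inv_mul]
  exact mul_pos (one_div_pos.2 (Finset.prod_pos fun t _ => hα _ (by lia)))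
    (leftPoly_div_derivative_pos c.pos.ne' hα hx c)

end ChristoffelNumbers

theorem stmt_12
    (p : ℕ) (hp : 1 ≤ p)
    (T : ℕ → ℕ → ℝ)
    (hT1 : ∀ n, T n (n + 1) = 1)
    (hTsup : ∀ n m, n + 1 < m → T n m = 0)
    (hTsub : ∀ n m, m + p < n → T n m = 0)
    (hTlow : ∀ n, p ≤ n → T n (n - p) ≠ 0)
    (B : ℕ → Polynomial ℝ)
    (hB0 : B 0 = 1)
    (hBrec : ∀ n, B (n + 1) = (X - C (T n n)) * B n
      - ∑ j ∈ Finset.Icc 1 p, (if j ≤ n then C (T n (n - j)) * B (n - j) else 0))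
    (A : Fin p → ℕ → Polynomial ℝ)
    (hAconst : ∀ a : Fin p, ∀ j < p, ∃ c : ℝ, A a j = C c)
    (hAzero : ∀ a : Fin p, ∀ j : ℕ, j < (a : ℕ) → A a j = 0)
    (hAone : ∀ a : Fin p, A a (a : ℕ) = 1)
    (hArec : ∀ a : Fin p, ∀ n : ℕ,
      (if n = 0 then 0 else A a (n - 1))
        + ∑ i ∈ Finset.range (p + 1), C (T (n + i) n) * A a (n + i) = X * A a n)
    (N : ℕ) (lam : Fin (N + 1) → ℝ)
    (hroots : ∀ k, eval (lam k) (B (N + 1)) = 0)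
    (hanti : StrictAnti lam)
    (hsimple : ∀ k, eval (lam k) (derivative (B (N + 1))) ≠ 0)
    (hden : ∀ k : Fin (N + 1), ∑ l ∈ Finset.range (N + 1),
      eval (lam k) (Qp p A l N) * eval (lam k) (B l) ≠ 0)
    (α : ℕ → ℝ) (hα : ∀ i, 1 ≤ i → 0 < α i)
    (hfact : truncM T N =
      (((List.range p).map fun k => Lmat p (N + 1) (k + 1) α).prod) * Umat p (N + 1) α)
    (Ccal : Matrix (Fin p) (Fin p) ℝ)
    (hCdiag : ∀ i : Fin p, Ccal i i = 1)
    (hCtri : ∀ i j : Fin p, j < i → Ccal i j = 0)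
    (hCnn : ∀ i j : Fin p, 0 ≤ Ccal i j)
    (hnu : Matrix.transpose ((nuMat p A)⁻¹) = scrL p α * Ccal) :
    ∀ (k : Fin (N + 1)) (a : Fin p), 0 < mu p A B N lam k a := by
  intro k a
  have hleft := vecMul_leftPoly_truncM hfact
  have hright := mulVec_truncM_typeII hT1 hTsup (X_mul_typeII hT1 hTsub hBrec) N
  have hlast : leftPoly p α N 0 N = 1 := leftPoly_self p α N 0
  have hchar : bidiagonalPoly p α N (N + 1) 0 = B (N + 1) :=
    eq_of_vecMul_eq_of_mulVec_eq hleft hright hlast hB0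
  have hroot : eval (lam k) (bidiagonalPoly p α N (N + 1) 0) = 0 := hchar ▸ hroots k
  have hpair : ∑ l ∈ Finset.range (N + 1), eval (lam k) (leftPoly p α N 0 l) * eval (lam k) (B l)
      = eval (lam k) (derivative (bidiagonalPoly p α N (N + 1) 0)) := by
    rw [hchar, ← dotProduct_eq_derivative_of_vecMul_eq_of_mulVec_eq hleft hright hlast hB0,
      dotProduct, eval_finsetSum, Finset.sum_range]
    simp only [eval_mul]
  have hQ (m : ℕ) (hm : m < N + p) := eval_Qp_eq_mul_eval_leftPoly hp hT1 hTsup hTsub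
    (fun n => by simpa using hTlow (n + p) (by lia)) hAconst (isUnit_det_nuMat hAzero hAone)
    hArec hfact hroot hm
  have hcol (c : Fin p) : 0 < ((fun b : Fin p => wfun p A B N lam k b) ᵥ* scrL p α) c := by
    simp only [wfun_eq_div hQ (hden k), hpair]
    exact vecMul_leftPoly_div_derivative_scrL_pos hα hroot c
  rw [mu_eq_vecMul hnu, ← Matrix.vecMul_vecMul]
  exact vecMul_pos hcol (hCnn · a) (hCdiag a ▸ one_pos)
end

section
/- (Stationary states of the finite Markov chains) Assume T^{[N]} admits a positive bidiagonal factorization, let λ_1 be its largest eigenvalue, and assume λ_1 is a simple zero of B_{N+1}, B_n(λ_1) > 0 for all 0 ≤ n ≤ N, and B^{[n]}_{N+1}(λ_1) > 0 for all 1 ≤ n ≤ N+1 (these hold for oscillatory matrices). Define the diagonal matrix π̃_{II} := diag(1/B_0(λ_1), …, 1/B_N(λ_1)) and the matrices P̃_{II} := π̃_{II}·(T^{[N]}/λ_1)·π̃_{II}^{−1} and P̃_I := π̃_I^{−1}·((T^{[N]})ᵀ/λ_1)·π̃_I, where π̃_I := diag(B^{[1]}_{N+1}(λ_1)/B^{[1]}_{N+1}(λ_1),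 B^{[2]}_{N+1}(λ_1)/B^{[1]}_{N+1}(λ_1), …, B^{[N+1]}_{N+1}(λ_1)/B^{[1]}_{N+1}(λ_1)). Then the row vector π with entries π_n := B^{[n]}_{N+1}(λ_1)·B_{n−1}(λ_1)/B'_{N+1}(λ_1), n = 1,…,N+1, satisfies π·P̃_{II} = π and π·P̃_I = π, each π_n > 0, and Σ_{n=1}^{N+1} π_n = 1. -/
open Polynomial

noncomputable def Btr (T : ℕ → ℕ → ℝ) (N k : ℕ) : Polynomial ℝ :=
  if k ≤ N + 1 then
    (Matrix.of fun i j : Fin (N + 1 - k) => T (k + (i : ℕ)) (k + (j : ℕ))).charpoly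
  else 0

noncomputable def piStat (T : ℕ → ℕ → ℝ) (B : ℕ → Polynomial ℝ) (N : ℕ) (lam1 : ℝ) :
    Fin (N + 1) → ℝ :=
  fun n => Polynomial.eval lam1 (Btr T N ((n : ℕ) + 1)) * Polynomial.eval lam1 (B (n : ℕ)) /
    Polynomial.eval lam1 (Polynomial.derivative (B (N + 1)))

noncomputable def PtildeII (T : ℕ → ℕ → ℝ) (B : ℕ → Polynomial ℝ) (N : ℕ) (lam1 : ℝ) :
    Matrix (Fin (N + 1)) (Fin (N + 1)) ℝ :=
  (Matrix.diagonal fun i : Fin (N + 1) => 1 / Polynomial.eval lam1 (B (i : ℕ))) *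
    (lam1⁻¹ • truncM T N) *
    (Matrix.diagonal fun i : Fin (N + 1) => 1 / Polynomial.eval lam1 (B (i : ℕ)))⁻¹

noncomputable def PtildeI (T : ℕ → ℕ → ℝ) (N : ℕ) (lam1 : ℝ) :
    Matrix (Fin (N + 1)) (Fin (N + 1)) ℝ :=
  (Matrix.diagonal fun i : Fin (N + 1) =>
      Polynomial.eval lam1 (Btr T N ((i : ℕ) + 1)) / Polynomial.eval lam1 (Btr T N 1))⁻¹ *
    (lam1⁻¹ • Matrix.transpose (truncM T N)) *
    (Matrix.diagonal fun i : Fin (N + 1) =>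
      Polynomial.eval lam1 (Btr T N ((i : ℕ) + 1)) / Polynomial.eval lam1 (Btr T N 1))

/-!
Write `wⱼ` for the truncated polynomial `B^{[j+1]}_{N+1}`. As `X - T` is lower Hessenberg with
superdiagonal entries `-1`, the row `w` is the first row of the adjugate of `X - T^{[N]}`, so
`w (X - T^{[N]}) = χ e₀` with `χ` the characteristic polynomial; and the recursion says
`(X - T^{[N]}) b = B_{N+1} e_N` for the column `b = (B₀, …, B_N)`. Multiplying out
`w (X - T^{[N]}) b` gives `χ = B_{N+1}`. Differentiating the second identity and multiplying by `w`
on the left gives `∑ wⱼ Bⱼ = B'_{N+1}`, since `w (X - T^{[N]}) b' = χ B₀' = 0`. At a zero `λ` of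
`B_{N+1}` the vectors `w(λ)` and `b(λ)` are thus left and right eigenvectors of `T^{[N]}`, and their
entrywise product, normalised by `B'_{N+1}(λ)`, is stationary for both chains.
-/

open Finset Matrix

section CharacteristicMatrix

variable {R n : Type*} [CommRing R] [Fintype n] [DecidableEq n]

theorem charmatrix_mulVec_apply (M : Matrix n n R) (v : n → R[X]) (i : n) :
    (M.charmatrix *ᵥ v) i = X * v i - ∑ j, C (M i j) * v j := by
  rw [charmatrix, sub_mulVec, Pi.sub_apply, scalar_apply, mulVec_diagonal]
  simp [mulVec_apply_eq_sum]

theorem derivative_charmatrix_mulVec (M : Matrix n n R) (v : n → R[X]) (i : n) :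
    derivative ((M.charmatrix *ᵥ v) i) =
      v i + (M.charmatrix *ᵥ fun j => derivative (v j)) i := by
  simp only [charmatrix_mulVec_apply, derivative_sub, derivative_mul, derivative_sum, derivative_X,
    derivative_C, zero_mul, zero_add, one_mul]
  ring

theorem eval_charmatrix_mulVec (M : Matrix n n R) (v : n → R[X]) (x : R) (i : n) :
    eval x ((M.charmatrix *ᵥ v) i) = x * eval x (v i) - (M *ᵥ fun j => eval x (v j)) i := by
  rw [charmatrix_mulVec_apply]
  simp [mulVec, dotProduct, eval_finsetSum]

theorem mulVec_eval_eq_smul {M : Matrix n n R} {v : n → R[X]} {x : R}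
    (hv : ∀ i, eval x ((M.charmatrix *ᵥ v) i) = 0) :
    M *ᵥ (fun i => eval x (v i)) = x • fun i => eval x (v i) := by
  ext i
  exact (sub_eq_zero.1 <| (eval_charmatrix_mulVec M v x i).symm.trans (hv i)).symm

end CharacteristicMatrix

section Hessenberg

/-- The `s × s` diagonal block of the infinite matrix `A` whose first row and column have
index `k`. -/
def diagBlock {R : Type*} (A : ℕ → ℕ → R) (k s : ℕ) : Matrix (Fin s) (Fin s) R :=
  Matrix.of fun i j => A (k + i) (k + j)

/-- The infinite matrix `A` is lower Hessenberg with all superdiagonal entries equal to `c`. -/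
structure IsLowerHessenberg {R : Type*} [Zero R] (A : ℕ → ℕ → R) (c : R) : Prop where
  superdiag : ∀ n, A n (n + 1) = c
  eq_zero : ∀ n m, n + 1 < m → A n m = 0

variable {R : Type*} [CommRing R]

theorem IsLowerHessenberg.det_submatrix_succAbove_succ {A : ℕ → ℕ → R} {c : R}
    (hA : IsLowerHessenberg A c) (s k : ℕ) (j : Fin (s + 1)) :
    ((diagBlock A k (s + 1)).submatrix j.succAbove Fin.succ).det =
      c ^ (j : ℕ) * (diagBlock A (k + (j + 1)) (s - j)).det := by
  induction s generalizing k with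
  | zero =>
    obtain rfl := Fin.fin_one_eq_zero j
    simp
  | succ s ih =>
    cases j using Fin.cases with
    | zero =>
      have hblock : (diagBlock A k (s + 2)).submatrix Fin.succ Fin.succ =
          diagBlock A (k + 1) (s + 1) := by
        ext i i'
        simp [diagBlock, add_assoc, add_comm 1]
      simp [hblock]
    | succ j =>
      set M := (diagBlock A k (s + 2)).submatrix j.succ.succAbove Fin.succ with hM
      have hcorner : M 0 0 = c := by simpa [hM, diagBlock] using hA.superdiag k
      have hfirstRow (i : Fin s) : M 0 i.succ = 0 := hA.eq_zero _ _ (by simp)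
      have hminor : M.submatrix Fin.succ Fin.succ =
          (diagBlock A (k + 1) (s + 1)).submatrix j.succAbove Fin.succ := by
        ext i i'
        simp [hM, diagBlock, add_assoc, add_comm 1]
      rw [det_succ_row_zero, Fin.sum_univ_succ, Fin.succAbove_zero, hminor, ih, hcorner,
        Fin.val_succ, Nat.add_sub_add_right]
      simp [hfirstRow, pow_succ', mul_assoc, add_assoc, add_comm 1]

theorem IsLowerHessenberg.adjugate_diagBlock_zero {A : ℕ → ℕ → R} {c : R}
    (hA : IsLowerHessenberg A c) (k s : ℕ) (j : Fin (s + 1)) :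
    (diagBlock A k (s + 1)).adjugate 0 j =
      (-c) ^ (j : ℕ) * (diagBlock A (k + (j + 1)) (s - j)).det := by
  have hminor := hA.det_submatrix_succAbove_succ s k j
  rw [adjugate_fin_succ_eq_det_submatrix, Fin.succAbove_zero, hminor]
  simp [← mul_assoc, ← mul_pow]

end Hessenberg

section RecursionPolynomials

/-- The infinite characteristic matrix `X - T`. -/
noncomputable def charArray {R : Type*} [Ring R] (T : ℕ → ℕ → R) (n m : ℕ) : R[X] :=
  (if n = m then X else 0) - C (T n m)

/-- The truncated polynomial `B^{[k]}_{N+1}`, for `k ≤ N + 1`: the characteristic polynomial of the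
block of `T` with indices `k, …, N`. For `k > N + 1` it is `1`, unlike `Btr T N k = 0`. -/
noncomputable def trailingCharpoly {R : Type*} [CommRing R] (T : ℕ → ℕ → R) (N k : ℕ) :
    R[X] :=
  (diagBlock T k (N + 1 - k)).charpoly

/-- `B` is the sequence of type II recursion polynomials of `T`. The recursion runs over all
previous indices, so no lower bandwidth is imposed on `T`. -/
structure IsTypeIIRecursion {R : Type*} [Ring R] (T : ℕ → ℕ → R) (B : ℕ → R[X]) : Prop where
  zero : B 0 = 1
  succ : ∀ n, B (n + 1) = X * B n - ∑ j ∈ range (n + 1), C (T n j) * B j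

variable {R : Type*} [CommRing R] {T : ℕ → ℕ → R} {B : ℕ → R[X]}

theorem isLowerHessenberg_charArray (hT : IsLowerHessenberg T 1) :
    IsLowerHessenberg (charArray T) (-1) where
  superdiag n := by simp [charArray, hT.superdiag]
  eq_zero n m hnm := by simp [charArray, hT.eq_zero n m hnm, show n ≠ m by omega]

theorem charmatrix_diagBlock (T : ℕ → ℕ → R) (k s : ℕ) :
    (diagBlock T k s).charmatrix = diagBlock (charArray T) k s := by
  ext1 i j
  simp [charmatrix_apply, diagBlock, charArray, diagonal_apply, Fin.ext_iff]

theorem trailingCharpoly_vecMul_charmatrix (hT : IsLowerHessenberg T 1) (N : ℕ) :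
    (fun j : Fin (N + 1) => trailingCharpoly T N (j + 1)) ᵥ* (diagBlock T 0 (N + 1)).charmatrix =
      Pi.single 0 (trailingCharpoly T N 0) := by
  have hadj : (fun j : Fin (N + 1) => trailingCharpoly T N (j + 1)) =
      (diagBlock T 0 (N + 1)).charmatrix.adjugate 0 := by
    ext1 j
    rw [charmatrix_diagBlock, (isLowerHessenberg_charArray hT).adjugate_diagBlock_zero,
      trailingCharpoly, charpoly, charmatrix_diagBlock, Nat.add_sub_add_right]
    simp
  ext1 j
  rw [hadj, ← mul_apply_eq_vecMul, adjugate_mul]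
  simp [trailingCharpoly, charpoly, one_apply, Pi.single_apply, eq_comm]

theorem trailingCharpoly_last (T : ℕ → ℕ → R) (N : ℕ) : trailingCharpoly T N (N + 1) = 1 := by
  rw [trailingCharpoly, Nat.sub_self, charpoly_isEmpty]

theorem IsTypeIIRecursion.sum_C_mul_eq_X_mul (hT : IsLowerHessenberg T 1)
    (hB : IsTypeIIRecursion T B) {N n : ℕ} (hn : n ≤ N) :
    ∑ j ∈ range (N + 2), C (T n j) * B j = X * B n := by
  have hupper : ∑ j ∈ range (n + 2), C (T n j) * B j = ∑ j ∈ range (N + 2), C (T n j) * B j := by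
    refine sum_subset (range_mono (by omega)) fun j _ hj => ?_
    rw [hT.eq_zero n j (by rw [mem_range] at hj; omega), C_0, zero_mul]
  rw [← hupper, sum_range_succ, hT.superdiag, hB.succ, C_1, one_mul, add_sub_cancel]

theorem IsTypeIIRecursion.charmatrix_mulVec (hT : IsLowerHessenberg T 1)
    (hB : IsTypeIIRecursion T B) (N : ℕ) :
    (diagBlock T 0 (N + 1)).charmatrix *ᵥ (fun n => B n) = Pi.single (Fin.last N) (B (N + 1)) := by
  ext1 n
  have hrow : ∑ j : Fin (N + 1), C (T n j) * B j + C (T n (N + 1)) * B (N + 1) = X * B n := by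
    rw [Fin.sum_univ_eq_sum_range (fun j => C (T n j) * B j), ← sum_range_succ,
      hB.sum_C_mul_eq_X_mul hT (by omega)]
  have hlastCol : C (T n (N + 1)) * B (N + 1) =
      (Pi.single (Fin.last N) (B (N + 1)) : Fin (N + 1) → R[X]) n := by
    obtain rfl | hn := eq_or_ne n (Fin.last N)
    · simp [hT.superdiag]
    · have := Fin.val_lt_last hn
      simp [hn, hT.eq_zero n (N + 1) (by omega)]
  rw [← hlastCol, charmatrix_mulVec_apply, ← hrow]
  simp [diagBlock]

theorem IsTypeIIRecursion.trailingCharpoly_zero (hT : IsLowerHessenberg T 1)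
    (hB : IsTypeIIRecursion T B) (N : ℕ) : trailingCharpoly T N 0 = B (N + 1) := by
  have h := dotProduct_mulVec (fun j : Fin (N + 1) => trailingCharpoly T N (j + 1))
    (diagBlock T 0 (N + 1)).charmatrix (fun n => B n)
  rw [trailingCharpoly_vecMul_charmatrix hT, hB.charmatrix_mulVec hT] at h
  simpa [trailingCharpoly_last, hB.zero] using h.symm

theorem IsTypeIIRecursion.derivative_eq_sum (hT : IsLowerHessenberg T 1)
    (hB : IsTypeIIRecursion T B) (N : ℕ) :
    derivative (B (N + 1)) = ∑ n : Fin (N + 1), trailingCharpoly T N (n + 1) * B n := by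
  set M := (diagBlock T 0 (N + 1)).charmatrix
  set w : Fin (N + 1) → R[X] := fun j => trailingCharpoly T N (j + 1) with hw
  set b : Fin (N + 1) → R[X] := fun n => B n
  set b' : Fin (N + 1) → R[X] := fun n => derivative (B n)
  have hderiv : Pi.single (Fin.last N) (derivative (B (N + 1))) = b + M *ᵥ b' := by
    ext1 n
    rw [Pi.add_apply, ← derivative_charmatrix_mulVec, hB.charmatrix_mulVec hT]
    obtain rfl | hn := eq_or_ne n (Fin.last N)
    · simp
    · simp [hn]
  have hvanish : w ⬝ᵥ M *ᵥ b' = 0 := by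
    rw [dotProduct_mulVec, trailingCharpoly_vecMul_charmatrix hT]
    simp [b', hB.zero]
  calc derivative (B (N + 1))
      = w ⬝ᵥ Pi.single (Fin.last N) (derivative (B (N + 1))) := by
        simp [hw, trailingCharpoly_last]
    _ = w ⬝ᵥ b := by rw [hderiv, dotProduct_add, hvanish, add_zero]

end RecursionPolynomials

section Eigenvectors

variable {R : Type*} [CommRing R] {T : ℕ → ℕ → R} {B : ℕ → R[X]} {N : ℕ} {x : R}

theorem IsTypeIIRecursion.mulVec_eval (hT : IsLowerHessenberg T 1) (hB : IsTypeIIRecursion T B)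
    (hx : eval x (B (N + 1)) = 0) :
    diagBlock T 0 (N + 1) *ᵥ (fun n : Fin (N + 1) => eval x (B n)) =
      x • fun n : Fin (N + 1) => eval x (B n) := by
  refine mulVec_eval_eq_smul (v := fun n : Fin (N + 1) => B n) fun i => ?_
  rw [hB.charmatrix_mulVec hT]
  obtain rfl | hi := eq_or_ne i (Fin.last N)
  · simpa using hx
  · simp [hi]

theorem eval_trailingCharpoly_vecMul (hT : IsLowerHessenberg T 1)
    (hx : eval x (trailingCharpoly T N 0) = 0) :
    (fun j : Fin (N + 1) => eval x (trailingCharpoly T N (j + 1))) ᵥ* diagBlock T 0 (N + 1) =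
      x • fun j : Fin (N + 1) => eval x (trailingCharpoly T N (j + 1)) := by
  rw [← mulVec_transpose]
  refine mulVec_eval_eq_smul (v := fun j : Fin (N + 1) => trailingCharpoly T N (j + 1)) fun i => ?_
  rw [charmatrix_transpose, mulVec_transpose, trailingCharpoly_vecMul_charmatrix hT]
  obtain rfl | hi := eq_or_ne i 0
  · simpa using hx
  · simp [hi]

end Eigenvectors

section DiagonalConjugation

variable {K n : Type*} [Field K] [Fintype n] [DecidableEq n]

theorem diagonal_inv_of_forall_ne_zero {f : n → K} (hf : ∀ i, f i ≠ 0) :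
    (diagonal f)⁻¹ = diagonal f⁻¹ :=
  inv_eq_right_inv <| by simp [diagonal_mul_diagonal, hf]

theorem vecMul_conj_diagonal_of_vecMul_eq_smul {A : Matrix n n K} {v f : n → K} {μ : K}
    (hμ : μ ≠ 0) (hf : ∀ i, f i ≠ 0) (hv : v ᵥ* A = μ • v) :
    (v * f) ᵥ* (diagonal f⁻¹ * (μ⁻¹ • A) * diagonal f) = v * f := by
  have hscale : (v * f) ᵥ* diagonal f⁻¹ = v := by
    ext i
    simp [vecMul_diagonal, hf]
  rw [← vecMul_vecMul, ← vecMul_vecMul, hscale, vecMul_smul, hv, inv_smul_smul₀ hμ]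
  ext i
  simp [vecMul_diagonal]

end DiagonalConjugation

section BidiagonalFactorization

theorem det_Lmat (p sz k : ℕ) (α : ℕ → ℝ) : (Lmat p sz k α).det = 1 := by
  rw [det_of_isLowerTriangular]
  · simp [Lmat]
  · intro i j (hij : i < j)
    simp [Lmat, show (i : ℕ) ≠ j by omega, show (i : ℕ) ≠ j + 1 by omega]

theorem det_Umat (p sz : ℕ) (α : ℕ → ℝ) :
    (Umat p sz α).det = ∏ i : Fin sz, α (1 + (i : ℕ) * (p + 1)) := by
  rw [det_of_isUpperTriangular]
  · simp [Umat]
  · intro i j (hij : j < i)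
    simp [Umat, show (i : ℕ) ≠ j by omega, show (j : ℕ) ≠ i + 1 by omega]

theorem det_prod_Lmat_mul_Umat_pos (p sz : ℕ) {α : ℕ → ℝ} (hα : ∀ i, 1 ≤ i → 0 < α i) :
    0 < (((List.range p).map fun k => Lmat p sz (k + 1) α).prod * Umat p sz α).det := by
  have hL : ((List.range p).map fun k => Lmat p sz (k + 1) α).prod.det = 1 := by
    rw [← coe_detMonoidHom, map_list_prod, List.map_map]
    exact List.prod_eq_one (by simp [det_Lmat])
  rw [det_mul, hL, one_mul, det_Umat]
  exact prod_pos fun i _ => hα _ (by omega)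

end BidiagonalFactorization

section StationaryState

variable {T : ℕ → ℕ → ℝ} {B : ℕ → ℝ[X]} {N : ℕ} {x : ℝ}

theorem truncM_eq_diagBlock (T : ℕ → ℕ → ℝ) (N : ℕ) : truncM T N = diagBlock T 0 (N + 1) := by
  ext i j
  simp [truncM, diagBlock]

theorem Btr_eq_trailingCharpoly (T : ℕ → ℕ → ℝ) {N k : ℕ} (hk : k ≤ N + 1) :
    Btr T N k = trailingCharpoly T N k :=
  if_pos hk

theorem isTypeIIRecursion_of_banded {p : ℕ} (hTsub : ∀ n m, m + p < n → T n m = 0)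
    (hB0 : B 0 = 1)
    (hBrec : ∀ n, B (n + 1) = (X - C (T n n)) * B n
      - ∑ j ∈ Icc 1 p, (if j ≤ n then C (T n (n - j)) * B (n - j) else 0)) :
    IsTypeIIRecursion T B where
  zero := hB0
  succ n := by
    have hband : ∑ j ∈ Icc 1 p, (if j ≤ n then C (T n (n - j)) * B (n - j) else 0) =
        ∑ j ∈ range n, C (T n j) * B j := by
      rw [← sum_filter, ← sum_filter_of_ne (s := range n) (p := fun j => n ≤ j + p)]
      · refine sum_nbij' (n - ·) (n - ·) ?_ ?_ ?_ ?_ fun _ _ => rfl <;> intro j hj <;>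
          simp only [mem_filter, mem_Icc, mem_range] at hj ⊢ <;> omega
      · intro j _ hj
        contrapose! hj
        simp [hTsub n j hj]
    rw [hBrec, hband, sum_range_succ]
    ring

theorem IsTypeIIRecursion.root_ne_zero (hT : IsLowerHessenberg T 1) (hB : IsTypeIIRecursion T B)
    (hdet : (truncM T N).det ≠ 0) (hx : eval x (B (N + 1)) = 0) : x ≠ 0 := by
  rintro rfl
  rw [← hB.trailingCharpoly_zero hT, ← coeff_zero_eq_eval_zero] at hx
  rw [truncM_eq_diagBlock, det_eq_sign_charpoly_coeff] at hdet
  exact hdet (mul_eq_zero_of_right _ hx)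

theorem IsTypeIIRecursion.eval_derivative_eq_sum (hT : IsLowerHessenberg T 1)
    (hB : IsTypeIIRecursion T B) (N : ℕ) (x : ℝ) :
    eval x (derivative (B (N + 1))) =
      ∑ n : Fin (N + 1), eval x (Btr T N (n + 1)) * eval x (B n) := by
  rw [hB.derivative_eq_sum hT, eval_finsetSum]
  refine sum_congr rfl fun n _ => ?_
  rw [eval_mul, Btr_eq_trailingCharpoly T (by omega)]

theorem IsTypeIIRecursion.eval_Btr_vecMul_truncM (hT : IsLowerHessenberg T 1)
    (hB : IsTypeIIRecursion T B) (hx : eval x (B (N + 1)) = 0) :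
    (fun j : Fin (N + 1) => eval x (Btr T N (j + 1))) ᵥ* truncM T N =
      x • fun j : Fin (N + 1) => eval x (Btr T N (j + 1)) := by
  have hBtr (j : Fin (N + 1)) : Btr T N (j + 1) = trailingCharpoly T N (j + 1) :=
    Btr_eq_trailingCharpoly T (by omega)
  simp only [hBtr, truncM_eq_diagBlock]
  exact eval_trailingCharpoly_vecMul hT (by rwa [hB.trailingCharpoly_zero hT])

theorem piStat_vecMul_PtildeII (hT : IsLowerHessenberg T 1) (hB : IsTypeIIRecursion T B)
    (hx0 : x ≠ 0) (hx : eval x (B (N + 1)) = 0) (hBx : ∀ n ≤ N, eval x (B n) ≠ 0) :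
    piStat T B N x ᵥ* PtildeII T B N x = piStat T B N x := by
  set b : Fin (N + 1) → ℝ := fun n => eval x (B n)
  set w : Fin (N + 1) → ℝ := fun n => eval x (Btr T N (n + 1))
  set d := eval x (derivative (B (N + 1))) with hd
  have hb (n : Fin (N + 1)) : b n ≠ 0 := hBx n (by omega)
  have hpi : piStat T B N x = d⁻¹ • w * b := by
    ext n
    simp only [piStat, ← hd, Pi.mul_apply, Pi.smul_apply, smul_eq_mul, b, w]
    ring
  have hP : PtildeII T B N x = diagonal b⁻¹ * (x⁻¹ • truncM T N) * diagonal b := by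
    have hdiag : (diagonal fun i : Fin (N + 1) => 1 / eval x (B i)) = diagonal b⁻¹ := by
      simp only [one_div]; rfl
    rw [PtildeII, hdiag, diagonal_inv_of_forall_ne_zero (by simpa using hb), inv_inv]
  rw [hP, hpi]
  refine vecMul_conj_diagonal_of_vecMul_eq_smul hx0 hb ?_
  rw [smul_vecMul, hB.eval_Btr_vecMul_truncM hT hx, smul_comm]

theorem piStat_vecMul_PtildeI (hT : IsLowerHessenberg T 1) (hB : IsTypeIIRecursion T B)
    (hx0 : x ≠ 0) (hx : eval x (B (N + 1)) = 0)
    (hBtrx : ∀ n, 1 ≤ n → n ≤ N + 1 → eval x (Btr T N n) ≠ 0) :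
    piStat T B N x ᵥ* PtildeI T N x = piStat T B N x := by
  set b : Fin (N + 1) → ℝ := fun n => eval x (B n)
  set c := eval x (Btr T N 1) with hc
  set f : Fin (N + 1) → ℝ := fun n => eval x (Btr T N (n + 1)) / c with hf
  set d := eval x (derivative (B (N + 1))) with hd
  have hc0 : c ≠ 0 := hBtrx 1 le_rfl (by omega)
  have hf0 (n : Fin (N + 1)) : f n ≠ 0 := div_ne_zero (hBtrx _ (by omega) (by omega)) hc0
  have hpi : piStat T B N x = (c / d) • b * f := by
    ext n
    simp only [piStat, ← hd, Pi.mul_apply, Pi.smul_apply, smul_eq_mul, b, f]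
    field_simp
  have hb : b ᵥ* (truncM T N)ᵀ = x • b := by
    rw [vecMul_transpose, truncM_eq_diagBlock, hB.mulVec_eval hT hx]
  rw [PtildeI, ← hc, ← hf, diagonal_inv_of_forall_ne_zero hf0, hpi]
  refine vecMul_conj_diagonal_of_vecMul_eq_smul hx0 hf0 ?_
  rw [smul_vecMul, hb, smul_comm]

theorem sum_piStat (hT : IsLowerHessenberg T 1) (hB : IsTypeIIRecursion T B)
    (hx : eval x (derivative (B (N + 1))) ≠ 0) : ∑ n, piStat T B N x n = 1 := by
  simp only [piStat]
  rw [← sum_div, ← hB.eval_derivative_eq_sum hT, div_self hx]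

theorem IsTypeIIRecursion.eval_derivative_pos (hT : IsLowerHessenberg T 1)
    (hB : IsTypeIIRecursion T B) (hBpos : ∀ n ≤ N, 0 < eval x (B n))
    (hBtrpos : ∀ n, 1 ≤ n → n ≤ N + 1 → 0 < eval x (Btr T N n)) :
    0 < eval x (derivative (B (N + 1))) := by
  rw [hB.eval_derivative_eq_sum hT]
  exact sum_pos (fun n _ => mul_pos (hBtrpos _ (by omega) (by omega)) (hBpos _ (by omega)))
    univ_nonempty

end StationaryState

theorem stmt_19_general {T : ℕ → ℕ → ℝ} (hT : IsLowerHessenberg T 1) {B : ℕ → ℝ[X]}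
    (hB : IsTypeIIRecursion T B) {N : ℕ} {lam : ℝ} (hlam : lam ≠ 0)
    (hroot : eval lam (B (N + 1)) = 0) (hBpos : ∀ n ≤ N, 0 < eval lam (B n))
    (hBtrpos : ∀ n, 1 ≤ n → n ≤ N + 1 → 0 < eval lam (Btr T N n)) :
    piStat T B N lam ᵥ* PtildeII T B N lam = piStat T B N lam ∧
    piStat T B N lam ᵥ* PtildeI T N lam = piStat T B N lam ∧
    (∀ n, 0 < piStat T B N lam n) ∧
    ∑ n, piStat T B N lam n = 1 := by
  have hderiv := hB.eval_derivative_pos hT hBpos hBtrpos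
  refine ⟨?_, ?_, fun n => ?_, sum_piStat hT hB hderiv.ne'⟩
  · exact piStat_vecMul_PtildeII hT hB hlam hroot fun n hn => (hBpos n hn).ne'
  · exact piStat_vecMul_PtildeI hT hB hlam hroot fun n h₁ hn => (hBtrpos n h₁ hn).ne'
  · exact div_pos (mul_pos (hBtrpos _ (by omega) (by omega)) (hBpos n (by omega))) hderiv

theorem stmt_19
    (p : ℕ) (hp : 1 ≤ p)
    (T : ℕ → ℕ → ℝ)
    (hT1 : ∀ n, T n (n + 1) = 1)
    (hTsup : ∀ n m, n + 1 < m → T n m = 0)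
    (hTsub : ∀ n m, m + p < n → T n m = 0)
    (hTlow : ∀ n, p ≤ n → T n (n - p) ≠ 0)
    (B : ℕ → Polynomial ℝ)
    (hB0 : B 0 = 1)
    (hBrec : ∀ n, B (n + 1) = (X - C (T n n)) * B n
      - ∑ j ∈ Finset.Icc 1 p, (if j ≤ n then C (T n (n - j)) * B (n - j) else 0))
    (N : ℕ) (α : ℕ → ℝ) (hα : ∀ i, 1 ≤ i → 0 < α i)
    (hfact : truncM T N =
      (((List.range p).map fun k => Lmat p (N + 1) (k + 1) α).prod) * Umat p (N + 1) α)
    (lam1 : ℝ)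
    (hroot : eval lam1 (B (N + 1)) = 0)
    (hmax : ∀ z : ℝ, eval z (B (N + 1)) = 0 → z ≤ lam1)
    (hsimple : eval lam1 (derivative (B (N + 1))) ≠ 0)
    (hBpos : ∀ n : ℕ, n ≤ N → 0 < eval lam1 (B n))
    (hBtrpos : ∀ n : ℕ, 1 ≤ n → n ≤ N + 1 → 0 < eval lam1 (Btr T N n)) :
    Matrix.vecMul (piStat T B N lam1) (PtildeII T B N lam1) = piStat T B N lam1 ∧
    Matrix.vecMul (piStat T B N lam1) (PtildeI T N lam1) = piStat T B N lam1 ∧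
    (∀ n : Fin (N + 1), 0 < piStat T B N lam1 n) ∧
    (∑ n : Fin (N + 1), piStat T B N lam1 n = 1) := by
  have hT : IsLowerHessenberg T 1 := ⟨hT1, hTsup⟩
  have hB := isTypeIIRecursion_of_banded hTsub hB0 hBrec
  have hdet : (truncM T N).det ≠ 0 := hfact ▸ (det_prod_Lmat_mul_Umat_pos p (N + 1) hα).ne'
  exact stmt_19_general hT hB (hB.root_ne_zero hT hdet hroot) hroot hBpos hBtrpos
end
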